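/- Non-asymptotic AEP upper bound for the smoothed max-relative entropy: Let ρ, σ be states on ℂ^d, γ ∈ (0,1], ε ∈ (0,1) and n ≥ 1. Then (1/n) · D_max^ε(ρ^{⊗n}‖σ^{⊗n}) ≤ D(ρ‖σ) + (4·c_γ(ρ‖σ)/√n) · log(2/ε) + (1/n) · log(1/(1−ε²)) in the extended reals. -/

import Mathlib

open scoped Kronecker ComplexOrder

noncomputable section

namespace QCD

attribute [local instance] Classical.propDecidable

variable {n m : Type} [Fintype n] [DecidableEq n] [Fintype m] [DecidableEq m]

/-- The real part of the trace of a complex matrix. -/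
def rtr (A : Matrix n n ℂ) : ℝ := (A.trace).re

/-- A quantum state: positive semidefinite with trace one. -/
def IsState (ρ : Matrix n n ℂ) : Prop := ρ.PosSemidef ∧ ρ.trace = 1

/-- Loewner order: `A ≤ B` iff `B - A` is positive semidefinite. -/
def loewnerLE (A B : Matrix n n ℂ) : Prop := (B - A).PosSemidef

/-- Support containment (for PSD matrices): `ker σ ⊆ ker ρ`. -/
def SuppLE (ρ σ : Matrix n n ℂ) : Prop := ∀ v : n → ℂ, σ.mulVec v = 0 → ρ.mulVec v = 0

/-- Functional calculus for Hermitian matrices (junk value `0` otherwise). -/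
def matFun (f : ℝ → ℝ) (A : Matrix n n ℂ) : Matrix n n ℂ :=
  if hA : A.IsHermitian then
    (hA.eigenvectorUnitary : Matrix n n ℂ) *
      Matrix.diagonal (fun i => (f (hA.eigenvalues i) : ℂ)) *
      (star (hA.eigenvectorUnitary : Matrix n n ℂ))
  else 0

/-- Matrix square root via functional calculus. -/
def msqrt (A : Matrix n n ℂ) : Matrix n n ℂ := matFun Real.sqrt A

/-- Matrix real power taken on the support (`0 ^ t := 0`). -/
def mpow (A : Matrix n n ℂ) (t : ℝ) : Matrix n n ℂ :=
  matFun (fun x => if x = 0 then 0 else x ^ t) A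

/-- Matrix base-2 logarithm on the support. -/
def mlog (A : Matrix n n ℂ) : Matrix n n ℂ := matFun (Real.logb 2) A

/-- Positive part of a Hermitian matrix. -/
def mposPart (A : Matrix n n ℂ) : Matrix n n ℂ := matFun (fun x => max x 0) A

/-- Trace norm. -/
def traceNorm (A : Matrix n m ℂ) : ℝ := rtr (msqrt (A.conjTranspose * A))

/-- Base-2 logarithm as an extended real (`⊥` on nonpositive input). -/
def elog (x : ℝ) : EReal := if x ≤ 0 then ⊥ else ((Real.logb 2 x : ℝ) : EReal)

/-- Base-2 logarithm of an extended real. -/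
def elogE (x : EReal) : EReal := if x = ⊤ then ⊤ else elog x.toReal

/-- `2 ^ x` for an extended real `x`. -/
def epow2 (x : EReal) : EReal :=
  if x = ⊤ then ⊤ else if x = ⊥ then 0 else ((((2:ℝ) ^ x.toReal : ℝ)) : EReal)

/-- Umegaki relative entropy (base 2), `⊤` if the support condition fails. -/
def relEntropy (ρ σ : Matrix n n ℂ) : EReal :=
  if SuppLE ρ σ then ((rtr (ρ * (mlog ρ - mlog σ)) : ℝ) : EReal) else ⊤

/-- Petz–Rényi divergence (base 2). -/
def petzRenyi (α : ℝ) (ρ σ : Matrix n n ℂ) : EReal :=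
  if 1 < α ∧ ¬ SuppLE ρ σ then ⊤
  else (((α - 1)⁻¹ : ℝ) : EReal) * elog (rtr (mpow ρ α * mpow σ (1 - α)))

/-- Geometric (maximal) Rényi divergence (base 2). -/
def geomRenyi (α : ℝ) (ρ σ : Matrix n n ℂ) : EReal :=
  if SuppLE ρ σ then
    (((α - 1)⁻¹ : ℝ) : EReal) *
      elog (rtr (σ * mpow (mpow σ (-(1/2 : ℝ)) * ρ * mpow σ (-(1/2 : ℝ))) α))
  else ⊤

/-- Max-relative entropy (base 2). -/
def dMax (ρ σ : Matrix n n ℂ) : EReal :=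
  sInf {x : EReal | ∃ lam : ℝ, x = (lam : EReal) ∧ loewnerLE ρ ((((2:ℝ) ^ lam : ℝ) : ℂ) • σ)}

/-- Uhlmann fidelity. -/
def fidelity (ρ σ : Matrix n n ℂ) : ℝ := (rtr (msqrt (msqrt σ * ρ * msqrt σ))) ^ 2

/-- Sine (purified) distance. -/
def sineDist (ρ σ : Matrix n n ℂ) : ℝ := Real.sqrt (1 - fidelity ρ σ)

/-- Smoothed max-relative entropy: smoothing over states in the sine-distance ball. -/
def dMaxSmooth (δ : ℝ) (ρ σ : Matrix n n ℂ) : EReal :=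
  ⨅ (ρ' : Matrix n n ℂ) (_ : IsState ρ' ∧ sineDist ρ ρ' ≤ δ), dMax ρ' σ

/-- Hypothesis testing divergence (base 2). -/
def dH (ε : ℝ) (ρ σ : Matrix n n ℂ) : EReal :=
  - elog (sInf {x : ℝ | ∃ T : Matrix n n ℂ,
      T.PosSemidef ∧ ((1 : Matrix n n ℂ) - T).PosSemidef ∧ 1 - ε ≤ rtr (T * ρ) ∧ x = rtr (T * σ)})

/-- The quantity `c_γ(ρ‖σ)`. -/
def cGamma (γ : ℝ) (ρ σ : Matrix n n ℂ) : EReal :=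
  ((γ⁻¹ : ℝ) : EReal) *
    elogE (epow2 ((γ : ℝ) * petzRenyi (1 + γ) ρ σ) +
           epow2 (((-γ : ℝ) : EReal) * petzRenyi (1 - γ) ρ σ) + 1)

/-- Binary entropy (base 2). -/
def binEnt (x : ℝ) : ℝ := -(x * Real.logb 2 x) - (1 - x) * Real.logb 2 (1 - x)

/-- Action of `id_k ⊗ Φ` on block matrices. -/
def blockApply {k : Type} (Φ : Matrix n n ℂ →ₗ[ℂ] Matrix m m ℂ)
    (M : Matrix (k × n) (k × n) ℂ) : Matrix (k × m) (k × m) ℂ :=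
  Matrix.of fun p q => Φ (Matrix.of fun a b => M (p.1, a) (q.1, b)) p.2 q.2

/-- Action of `Φ ⊗ id_k` on block matrices. -/
def blockApplyRight {k : Type} (Φ : Matrix n n ℂ →ₗ[ℂ] Matrix m m ℂ)
    (M : Matrix (n × k) (n × k) ℂ) : Matrix (m × k) (m × k) ℂ :=
  Matrix.of fun p q => Φ (Matrix.of fun a b => M (a, p.2) (b, q.2)) p.1 q.1

/-- Quantum channel: trace preserving and completely positive. -/
def IsQChannel (Φ : Matrix n n ℂ →ₗ[ℂ] Matrix m m ℂ) : Prop :=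
  (∀ M : Matrix n n ℂ, (Φ M).trace = M.trace) ∧
  (∀ k : ℕ, 1 ≤ k → ∀ M : Matrix (Fin k × n) (Fin k × n) ℂ, M.PosSemidef →
    (blockApply Φ M).PosSemidef)

/-- `id_k ⊗ Φ` as a linear map. -/
def blockApplyL (k : Type) (Φ : Matrix n n ℂ →ₗ[ℂ] Matrix m m ℂ) :
    Matrix (k × n) (k × n) ℂ →ₗ[ℂ] Matrix (k × m) (k × m) ℂ where
  toFun := blockApply Φ
  map_add' M N := by
    ext p q
    show Φ (Matrix.of fun a b => (M + N) (p.1, a) (q.1, b)) p.2 q.2 = _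
    have h : (Matrix.of fun a b => (M + N) (p.1, a) (q.1, b)) =
        (Matrix.of fun a b => M (p.1, a) (q.1, b)) +
          (Matrix.of fun a b => N (p.1, a) (q.1, b)) := rfl
    rw [h, map_add]
    rfl
  map_smul' c M := by
    ext p q
    show Φ (Matrix.of fun a b => (c • M) (p.1, a) (q.1, b)) p.2 q.2 = _
    have h : (Matrix.of fun a b => (c • M) (p.1, a) (q.1, b)) =
        c • (Matrix.of fun a b => M (p.1, a) (q.1, b)) := rfl
    rw [h, map_smul]
    rfl

/-- `Φ ⊗ id_k` as a linear map. -/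
def blockApplyRightL (k : Type) (Φ : Matrix n n ℂ →ₗ[ℂ] Matrix m m ℂ) :
    Matrix (n × k) (n × k) ℂ →ₗ[ℂ] Matrix (m × k) (m × k) ℂ where
  toFun := blockApplyRight Φ
  map_add' M N := by
    ext p q
    show Φ (Matrix.of fun a b => (M + N) (a, p.2) (b, q.2)) p.1 q.1 = _
    have h : (Matrix.of fun a b => (M + N) (a, p.2) (b, q.2)) =
        (Matrix.of fun a b => M (a, p.2) (b, q.2)) +
          (Matrix.of fun a b => N (a, p.2) (b, q.2)) := rfl
    rw [h, map_add]
    rfl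
  map_smul' c M := by
    ext p q
    show Φ (Matrix.of fun a b => (c • M) (a, p.2) (b, q.2)) p.1 q.1 = _
    have h : (Matrix.of fun a b => (c • M) (a, p.2) (b, q.2)) =
        c • (Matrix.of fun a b => M (a, p.2) (b, q.2)) := rfl
    rw [h, map_smul]
    rfl

/-- Tensor product of two channels (Kronecker product action). -/
def tensorChannel {n₁ m₁ n₂ m₂ : Type}
    (E₁ : Matrix n₁ n₁ ℂ →ₗ[ℂ] Matrix m₁ m₁ ℂ) (E₂ : Matrix n₂ n₂ ℂ →ₗ[ℂ] Matrix m₂ m₂ ℂ) :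
    Matrix (n₁ × n₂) (n₁ × n₂) ℂ →ₗ[ℂ] Matrix (m₁ × m₂) (m₁ × m₂) ℂ :=
  (blockApplyRightL m₂ E₁).comp (blockApplyL n₁ E₂)

/-- Index type for `k`-fold tensor powers. -/
def tpow (ι : Type) : ℕ → Type
  | 0 => PUnit
  | (k+1) => tpow ι k × ι

def tpowFintype (ι : Type) [Fintype ι] : ∀ k : ℕ, Fintype (tpow ι k)
  | 0 => inferInstanceAs (Fintype PUnit)
  | (k+1) => letI := tpowFintype ι k; inferInstanceAs (Fintype (tpow ι k × ι))

instance (ι : Type) [Fintype ι] (k : ℕ) : Fintype (tpow ι k) := tpowFintype ι k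

def tpowDecEq (ι : Type) [DecidableEq ι] : ∀ k : ℕ, DecidableEq (tpow ι k)
  | 0 => inferInstanceAs (DecidableEq PUnit)
  | (k+1) => letI := tpowDecEq ι k; inferInstanceAs (DecidableEq (tpow ι k × ι))

instance (ι : Type) [DecidableEq ι] (k : ℕ) : DecidableEq (tpow ι k) := tpowDecEq ι k

/-- `k`-fold Kronecker tensor power of a matrix. -/
def tpowMat (ρ : Matrix n n ℂ) : ∀ k : ℕ, Matrix (tpow n k) (tpow n k) ℂ
  | 0 => 1
  | (k+1) => (tpowMat ρ k) ⊗ₖ ρ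

/-- `k`-fold tensor power of a channel. -/
def tpowChannel (Φ : Matrix n n ℂ →ₗ[ℂ] Matrix m m ℂ) :
    ∀ k : ℕ, Matrix (tpow n k) (tpow n k) ℂ →ₗ[ℂ] Matrix (tpow m k) (tpow m k) ℂ
  | 0 => LinearMap.id
  | (k+1) => tensorChannel (tpowChannel Φ k) Φ

/-- Channel divergence induced by a divergence `𝔇` on states:
sup over `k ≥ 1` and input states `ν` on `ℂ^k ⊗ ℂ^d`. -/
def chDiv (𝔇 : ∀ (p : Type) [Fintype p] [DecidableEq p], Matrix p p ℂ → Matrix p p ℂ → EReal)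
    (E F : Matrix n n ℂ →ₗ[ℂ] Matrix m m ℂ) : EReal :=
  ⨆ (k : ℕ) (_ : 1 ≤ k) (ν : Matrix (Fin k × n) (Fin k × n) ℂ) (_ : IsState ν),
    𝔇 (Fin k × m) (blockApply E ν) (blockApply F ν)

/-- The geometric Rényi divergence as a divergence family. -/
def geomD (α : ℝ) : ∀ (p : Type) [Fintype p] [DecidableEq p],
    Matrix p p ℂ → Matrix p p ℂ → EReal :=
  fun _ _ _ => geomRenyi α

/-- The Umegaki relative entropy as a divergence family. -/
def relD : ∀ (p : Type) [Fintype p] [DecidableEq p],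
    Matrix p p ℂ → Matrix p p ℂ → EReal :=
  fun _ _ _ => relEntropy

/-- The hypothesis testing divergence as a divergence family. -/
def dHD (ε : ℝ) : ∀ (p : Type) [Fintype p] [DecidableEq p],
    Matrix p p ℂ → Matrix p p ℂ → EReal :=
  fun _ _ _ => dH ε

/-- Regularized channel relative entropy. -/
def regRelEntropy (E F : Matrix n n ℂ →ₗ[ℂ] Matrix m m ℂ) : EReal :=
  ⨆ (k : ℕ) (_ : 1 ≤ k),
    (((k : ℝ)⁻¹ : ℝ) : EReal) * chDiv relD (tpowChannel E k) (tpowChannel F k)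

end QCD

/-!
Let `P` be the first Nussbaum–Szkoła distribution of `(ρ, σ)` and `x` the log-likelihood ratio of
the two: `Tr[ρ^(1+t) σ^(-t)] = ∑ P e^(t x)` and `D(ρ‖σ)` is the mean of `x`, in nats, so the
divergences involved are those of a classical pair.

One-shot bound: write `ρ = R Rᴴ` and look for the smoothing state in the form `L Lᴴ`, normalised,
so that the overlap `Tr[Rᴴ L]` bounds the fidelity from below. Filtering the matrix of eigenvector
overlaps by the Schur multiplier `√a √b / (a + b) = ∫ √a e^(-a t) √b e^(-b t) dt`, whose norm is at
most `1 / 2`, gives `L Lᴴ ≤ σ / 4`, while the overlap becomes, up to scale, the `P`-mass of the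
relaxed event that the likelihood ratio is below a threshold. A Markov-type tail bound at order `δ`
then compares `D_max^ε` with `D_{1+δ}`.

Asymptotics: `D_{1+δ}` is additive on tensor powers, and a second-order expansion of `∑ P e^(δ x)`
gives `D_{1+δ} ≤ D + 2 δ c_γ²`. The result is the case `δ = 1 / (2 √n c_γ)`.
-/

namespace QCD

section FunctionalCalculus

open Matrix

variable {ι : Type} [Fintype ι] [DecidableEq ι] {A : Matrix ι ι ℂ}

lemma matFun_eq_cfc (f : ℝ → ℝ) (A : Matrix ι ι ℂ) : matFun f A = cfc f A := by
  by_cases hA : A.IsHermitian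
  · rw [matFun, dif_pos hA, hA.cfc_eq, Matrix.IsHermitian.cfc, Unitary.conjStarAlgAut_apply]
    rfl
  · rw [matFun, dif_neg hA]
    exact (cfc_apply_of_not_predicate A hA).symm

lemma continuousOn_spectrum (f : ℝ → ℝ) (A : Matrix ι ι ℂ) : ContinuousOn f (spectrum ℝ A) :=
  A.finite_real_spectrum.continuousOn f

lemma matFun_mul_matFun (f g : ℝ → ℝ) (A : Matrix ι ι ℂ) :
    matFun f A * matFun g A = matFun (fun x => f x * g x) A := by
  simp only [matFun_eq_cfc]
  exact (cfc_mul f g A (continuousOn_spectrum f A) (continuousOn_spectrum g A)).symm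

lemma matFun_sub (f g : ℝ → ℝ) (A : Matrix ι ι ℂ) :
    matFun (fun x => f x - g x) A = matFun f A - matFun g A := by
  simp only [matFun_eq_cfc]
  exact cfc_sub f g A (continuousOn_spectrum f A) (continuousOn_spectrum g A)

lemma matFun_id (hA : A.IsHermitian) : matFun (fun x => x) A = A := by
  rw [matFun_eq_cfc]
  exact cfc_id' ℝ A hA

lemma matFun_one (hA : A.IsHermitian) : matFun (fun _ => 1) A = 1 := by
  rw [matFun_eq_cfc]
  exact cfc_const_one ℝ A hA

lemma isHermitian_matFun (f : ℝ → ℝ) (A : Matrix ι ι ℂ) : (matFun f A).IsHermitian := by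
  rw [matFun_eq_cfc]
  exact cfc_predicate f A

lemma matFun_congr (hA : A.PosSemidef) {f g : ℝ → ℝ} (h : ∀ x, 0 ≤ x → f x = g x) :
    matFun f A = matFun g A := by
  rw [matFun_eq_cfc, matFun_eq_cfc]
  refine cfc_congr fun x hx => h x ?_
  obtain ⟨i, rfl⟩ := hA.1.spectrum_real_eq_range_eigenvalues ▸ hx
  exact hA.eigenvalues_nonneg i

open scoped MatrixOrder in
lemma posSemidef_matFun (hA : A.PosSemidef) {f : ℝ → ℝ} (h : ∀ x, 0 ≤ x → 0 ≤ f x) :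
    (matFun f A).PosSemidef := by
  rw [matFun_eq_cfc, ← Matrix.nonneg_iff_posSemidef]
  refine cfc_nonneg fun x hx => h x ?_
  obtain ⟨i, rfl⟩ := hA.1.spectrum_real_eq_range_eigenvalues ▸ hx
  exact hA.eigenvalues_nonneg i

end FunctionalCalculus

section SchurMultiplier

open Matrix MeasureTheory Set
open scoped Matrix.Norms.L2Operator

variable {ι κ : Type*} [Fintype ι] [Fintype κ]

lemma dotProduct_mulVec_eq_inner (M : Matrix κ ι ℂ) (x : κ → ℂ) (y : ι → ℂ) :
    star x ⬝ᵥ (M *ᵥ y) = inner ℂ (WithLp.toLp 2 x) (WithLp.toLp 2 (M *ᵥ y)) := by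
  rw [EuclideanSpace.inner_toLp_toLp, dotProduct_comm]

lemma re_dotProduct_mulVec_eq_sum (M : Matrix κ ι ℂ) (x : κ → ℂ) (y : ι → ℂ) :
    (star x ⬝ᵥ (M *ᵥ y)).re = ∑ j, ∑ i, (star (x j) * M j i * y i).re := by
  simp [dotProduct, mulVec, Finset.mul_sum, mul_assoc]

/-- The Schur multiplier by the Gram kernel `(j, i) ↦ ∫ u j * v i ∂μ`. -/
def gramMultiplier {Ω : Type*} [MeasurableSpace Ω] (μ : Measure Ω) (u : κ → Ω → ℝ) (v : ι → Ω → ℝ)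
    (M : Matrix κ ι ℂ) : Matrix κ ι ℂ :=
  Matrix.of fun j i => ((∫ t, u j t * v i t ∂μ : ℝ) : ℂ) * M j i

lemma re_dotProduct_gramMultiplier_mulVec {Ω : Type*} [MeasurableSpace Ω] {μ : Measure Ω}
    {u : κ → Ω → ℝ} {v : ι → Ω → ℝ} (huv : ∀ j i, Integrable (fun t => u j t * v i t) μ)
    (M : Matrix κ ι ℂ) (x : κ → ℂ) (y : ι → ℂ) :
    (star x ⬝ᵥ (gramMultiplier μ u v M *ᵥ y)).re =
      ∫ t, ∑ j, ∑ i, (star (x j) * M j i * y i).re * (u j t * v i t) ∂μ := by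
  rw [integral_finsetSum _ fun j _ => integrable_finsetSum _ fun i _ => (huv j i).const_mul _,
    re_dotProduct_mulVec_eq_sum]
  simp only [integral_finsetSum _ fun i _ => (huv _ i).const_mul _, integral_const_mul]
  refine Finset.sum_congr rfl fun j _ => Finset.sum_congr rfl fun i _ => ?_
  rw [← Complex.re_mul_ofReal, gramMultiplier, of_apply]
  congr 1
  ring

variable [DecidableEq ι]

lemma re_dotProduct_mulVec_le (M : Matrix κ ι ℂ) (x : κ → ℂ) (y : ι → ℂ) :
    (star x ⬝ᵥ (M *ᵥ y)).re ≤ ‖M‖ * ((∑ j, ‖x j‖ ^ 2 + ∑ i, ‖y i‖ ^ 2) / 2) := by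
  rw [dotProduct_mulVec_eq_inner]
  calc _ ≤ ‖WithLp.toLp 2 x‖ * ‖WithLp.toLp 2 (M *ᵥ y)‖ := re_inner_le_norm (𝕜 := ℂ) _ _
    _ ≤ ‖WithLp.toLp 2 x‖ * (‖M‖ * ‖WithLp.toLp 2 y‖) := by
      gcongr
      exact M.l2_opNorm_mulVec (WithLp.toLp 2 y)
    _ = ‖M‖ * (‖WithLp.toLp 2 x‖ * ‖WithLp.toLp 2 y‖) := by ring
    _ ≤ ‖M‖ * ((‖WithLp.toLp 2 x‖ ^ 2 + ‖WithLp.toLp 2 y‖ ^ 2) / 2) := by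
      gcongr
      linarith [two_mul_le_add_sq ‖WithLp.toLp 2 x‖ ‖WithLp.toLp 2 y‖]
    _ = _ := by simp only [EuclideanSpace.norm_sq_eq]

lemma l2_opNorm_le_of_re_dotProduct_le {M : Matrix κ ι ℂ} {C : ℝ} (hC : 0 ≤ C)
    (h : ∀ x y, (star x ⬝ᵥ (M *ᵥ y)).re ≤ C * ((∑ j, ‖x j‖ ^ 2 + ∑ i, ‖y i‖ ^ 2) / 2)) :
    ‖M‖ ≤ C := by
  rw [l2_opNorm_def]
  refine ContinuousLinearMap.opNorm_le_of_unit_norm hC fun y hy => ?_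
  set z : EuclideanSpace ℂ κ := WithLp.toLp 2 (M *ᵥ y.ofLp) with hz
  change ‖z‖ ≤ C
  rcases eq_or_ne z 0 with h0 | h0
  · simpa [h0] using hC
  have hz' : ‖z‖ ≠ 0 := norm_ne_zero_iff.mpr h0
  set x : EuclideanSpace ℂ κ := (‖z‖⁻¹ : ℂ) • z with hx
  have hx1 : ‖x‖ = 1 := by simp [hx, norm_smul, hz']
  have key := h x.ofLp y.ofLp
  rw [dotProduct_mulVec_eq_inner, ← EuclideanSpace.norm_sq_eq, ← EuclideanSpace.norm_sq_eq, hx1, hy,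
    WithLp.toLp_ofLp, ← hz, hx, inner_smul_left, inner_self_eq_norm_sq_to_K] at key
  norm_num at key
  convert key using 1
  norm_cast
  field_simp

lemma sum_re_mul_weights_le (M : Matrix κ ι ℂ) (x : κ → ℂ) (y : ι → ℂ) (u : κ → ℝ) (v : ι → ℝ) :
    ∑ j, ∑ i, (star (x j) * M j i * y i).re * (u j * v i) ≤
      ‖M‖ * ((∑ j, ‖x j‖ ^ 2 * (u j * u j) + ∑ i, ‖y i‖ ^ 2 * (v i * v i)) / 2) := by
  convert re_dotProduct_mulVec_le M (fun j => (u j : ℂ) * x j) (fun i => (v i : ℂ) * y i) using 1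
  · rw [re_dotProduct_mulVec_eq_sum]
    refine Finset.sum_congr rfl fun j _ => Finset.sum_congr rfl fun i _ => ?_
    rw [← Complex.re_mul_ofReal]
    congr 1
    simp only [star_mul', Complex.star_def, Complex.conj_ofReal, Complex.ofReal_mul]
    ring
  · simp only [norm_mul, mul_pow, Complex.norm_real, Real.norm_eq_abs, sq_abs, ← sq, mul_comm]

theorem norm_gramMultiplier_le {Ω : Type*} [MeasurableSpace Ω] {μ : Measure Ω} {u : κ → Ω → ℝ}
    {v : ι → Ω → ℝ} {C : ℝ} (hC : 0 ≤ C) (hu : ∀ j, MemLp (u j) 2 μ) (hv : ∀ i, MemLp (v i) 2 μ)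
    (huC : ∀ j, ∫ t, u j t * u j t ∂μ ≤ C) (hvC : ∀ i, ∫ t, v i t * v i t ∂μ ≤ C)
    (M : Matrix κ ι ℂ) : ‖gramMultiplier μ u v M‖ ≤ ‖M‖ * C := by
  refine l2_opNorm_le_of_re_dotProduct_le (by positivity) fun x y => ?_
  have huv j i : Integrable (fun t => u j t * v i t) μ := (hu j).integrable_mul (hv i)
  have huu j : Integrable (fun t => ‖x j‖ ^ 2 * (u j t * u j t)) μ :=
    ((hu j).integrable_mul (hu j)).const_mul _
  have hvv i : Integrable (fun t => ‖y i‖ ^ 2 * (v i t * v i t)) μ :=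
    ((hv i).integrable_mul (hv i)).const_mul _
  have hsum_uu := integrable_finsetSum Finset.univ fun j _ => huu j
  have hsum_vv := integrable_finsetSum Finset.univ fun i _ => hvv i
  calc (star x ⬝ᵥ (gramMultiplier μ u v M *ᵥ y)).re
      = ∫ t, ∑ j, ∑ i, (star (x j) * M j i * y i).re * (u j t * v i t) ∂μ :=
        re_dotProduct_gramMultiplier_mulVec huv M x y
    _ ≤ ∫ t, ‖M‖ * ((∑ j, ‖x j‖ ^ 2 * (u j t * u j t) +
          ∑ i, ‖y i‖ ^ 2 * (v i t * v i t)) / 2) ∂μ := by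
        refine integral_mono
          (integrable_finsetSum _ fun j _ => integrable_finsetSum _ fun i _ =>
            (huv j i).const_mul _)
          (((hsum_uu.add hsum_vv).div_const 2).const_mul _)
          fun t => sum_re_mul_weights_le M x y (u · t) (v · t)
    _ = ‖M‖ * ((∑ j, ‖x j‖ ^ 2 * ∫ t, u j t * u j t ∂μ +
          ∑ i, ‖y i‖ ^ 2 * ∫ t, v i t * v i t ∂μ) / 2) := by
        rw [integral_const_mul, integral_div, integral_add hsum_uu hsum_vv,
          integral_finsetSum _ fun j _ => huu j, integral_finsetSum _ fun i _ => hvv i]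
        simp only [integral_const_mul]
    _ ≤ ‖M‖ * ((∑ j, ‖x j‖ ^ 2 * C + ∑ i, ‖y i‖ ^ 2 * C) / 2) := by
        gcongr with j _ i _
        exacts [huC j, hvC i]
    _ = ‖M‖ * C * ((∑ j, ‖x j‖ ^ 2 + ∑ i, ‖y i‖ ^ 2) / 2) := by
        rw [← Finset.sum_mul, ← Finset.sum_mul]
        ring

lemma integral_sqrt_mul_exp_mul_sqrt_mul_exp {a b : ℝ} (ha : 0 ≤ a) (hb : 0 ≤ b) :
    ∫ t in Ioi (0 : ℝ), (√a * Real.exp (-a * t)) * (√b * Real.exp (-b * t)) =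
      √a * √b / (a + b) := by
  rcases ha.eq_or_lt with rfl | ha
  · simp
  have (t : ℝ) : (√a * Real.exp (-a * t)) * (√b * Real.exp (-b * t)) =
      √a * √b * Real.exp (-(a + b) * t) := by
    rw [neg_add, add_mul, Real.exp_add]
    ring
  have hab : -(a + b) < 0 := by linarith
  simp only [this, integral_const_mul, integral_exp_mul_Ioi hab]
  simp [div_eq_mul_inv, -neg_add_rev]

lemma memLp_sqrt_mul_exp {a : ℝ} (ha : 0 ≤ a) :
    MemLp (fun t => √a * Real.exp (-a * t)) 2 (volume.restrict (Ioi 0)) := by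
  rcases ha.eq_or_lt with rfl | ha
  · simp
  rw [memLp_two_iff_integrable_sq (by fun_prop)]
  convert (integrableOn_exp_mul_Ioi (a := -(2 * a)) (by linarith) 0).const_mul a using 2 with t
  rw [mul_pow, Real.sq_sqrt ha.le, ← Real.exp_nat_mul]
  congr 2
  push_cast
  ring

/-- The Schur multiplier with entries `√(a j) √(b i) / (a j + b i)`, half the ratio of the geometric
to the arithmetic mean of `a j` and `b i`, and `0` where `a j = b i = 0`. -/
def geomMeanMultiplier (a : κ → ℝ) (b : ι → ℝ) (M : Matrix κ ι ℂ) : Matrix κ ι ℂ :=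
  Matrix.of fun j i => ((√(a j) * √(b i) / (a j + b i) : ℝ) : ℂ) * M j i

theorem norm_geomMeanMultiplier_le {a : κ → ℝ} {b : ι → ℝ} (ha : ∀ j, 0 ≤ a j)
    (hb : ∀ i, 0 ≤ b i) (M : Matrix κ ι ℂ) : ‖geomMeanMultiplier a b M‖ ≤ ‖M‖ * (1 / 2) := by
  have half {s : ℝ} (hs : 0 ≤ s) :
      ∫ t in Ioi (0 : ℝ), (√s * Real.exp (-s * t)) * (√s * Real.exp (-s * t)) ≤ 1 / 2 := by
    rw [integral_sqrt_mul_exp_mul_sqrt_mul_exp hs hs, Real.mul_self_sqrt hs]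
    exact div_le_of_le_mul₀ (by linarith) (by norm_num) (by linarith)
  convert norm_gramMultiplier_le (by norm_num) (fun j => memLp_sqrt_mul_exp (ha j))
    (fun i => memLp_sqrt_mul_exp (hb i)) (fun j => half (ha j)) (fun i => half (hb i)) M using 2
  ext j i
  rw [geomMeanMultiplier, gramMultiplier, of_apply, of_apply,
    integral_sqrt_mul_exp_mul_sqrt_mul_exp (ha j) (hb i)]

end SchurMultiplier

section Fidelity

open Matrix
open scoped Matrix.Norms.L2Operator

variable {ι κ : Type} [Fintype ι] [Fintype κ]

lemma rtr_mul_comm (A : Matrix ι κ ℂ) (B : Matrix κ ι ℂ) : rtr (A * B) = rtr (B * A) := by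
  rw [rtr, rtr, Matrix.trace_mul_comm]

lemma rtr_mul_conjTranspose (B : Matrix ι κ ℂ) : rtr (B * Bᴴ) = ∑ i, ∑ k, ‖B i k‖ ^ 2 := by
  simp only [rtr, Matrix.trace, diag_apply, mul_apply, conjTranspose_apply, Complex.re_sum,
    Complex.star_def, Complex.mul_conj']
  norm_cast

lemma rtr_conjTranspose_mul_mul (B : Matrix ι κ ℂ) (C : Matrix ι ι ℂ) :
    rtr (Bᴴ * C * B) = ∑ k, (star (B.col k) ⬝ᵥ (C *ᵥ B.col k)).re := by
  simp only [rtr, Matrix.trace, diag_apply, Complex.re_sum, Matrix.mul_assoc]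
  rfl

variable [DecidableEq ι]

lemma msqrt_mul_msqrt {A : Matrix ι ι ℂ} (hA : A.PosSemidef) : msqrt A * msqrt A = A := by
  rw [msqrt, matFun_mul_matFun]
  conv_rhs => rw [← matFun_id hA.1]
  exact matFun_congr hA fun x hx => Real.mul_self_sqrt hx

lemma conjTranspose_msqrt (A : Matrix ι ι ℂ) : (msqrt A)ᴴ = msqrt A := isHermitian_matFun _ A

lemma rtr_mul_le_norm_mul_rtr (C : Matrix ι ι ℂ) {P : Matrix ι ι ℂ} (hP : P.PosSemidef) :
    rtr (C * P) ≤ ‖C‖ * rtr P := by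
  set B := msqrt P
  have hB : B * Bᴴ = P := by rw [conjTranspose_msqrt, msqrt_mul_msqrt hP]
  calc rtr (C * P) = rtr (Bᴴ * C * B) := by
        rw [← hB, ← Matrix.mul_assoc, rtr_mul_comm, Matrix.mul_assoc]
    _ ≤ ∑ k, ‖C‖ * ((∑ i, ‖B i k‖ ^ 2 + ∑ i, ‖B i k‖ ^ 2) / 2) := by
        rw [rtr_conjTranspose_mul_mul]
        exact Finset.sum_le_sum fun k _ => re_dotProduct_mulVec_le C _ _
    _ = ‖C‖ * rtr P := by
        simp only [add_self_div_two, ← Finset.mul_sum]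
        rw [← hB, rtr_mul_conjTranspose, Finset.sum_comm]

lemma matFun_mul_mul_conjTranspose (f g : ℝ → ℝ) (L : Matrix ι κ ℂ) :
    matFun f (L * Lᴴ) * L * (matFun g (L * Lᴴ) * L)ᴴ =
      matFun (fun x => f x * x * g x) (L * Lᴴ) := by
  rw [← matFun_mul_matFun, ← matFun_mul_matFun, matFun_id (isHermitian_mul_conjTranspose_self L),
    conjTranspose_mul, (isHermitian_matFun g _).eq]
  simp only [Matrix.mul_assoc]

lemma exists_msqrt_mul_eq [DecidableEq κ] (L : Matrix ι κ ℂ) :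
    ∃ Z : Matrix ι κ ℂ, ‖Z‖ ≤ 1 ∧ msqrt (L * Lᴴ) * Z = L := by
  have hP : (L * Lᴴ).PosSemidef := posSemidef_self_mul_conjTranspose L
  refine ⟨matFun (fun x => (√x)⁻¹) (L * Lᴴ) * L, ?_, ?_⟩
  · rw [← l2_opNorm_conjTranspose, ← sq_le_one_iff₀ (norm_nonneg _), sq,
      ← l2_opNorm_conjTranspose_mul_self, conjTranspose_conjTranspose,
      matFun_mul_mul_conjTranspose, matFun_eq_cfc]
    refine norm_cfc_le zero_le_one fun x _ => ?_
    rcases eq_or_ne (√x) 0 with h0 | h0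
    · simp [h0]
    have hx : √x * √x = x := Real.mul_self_sqrt (Real.sqrt_ne_zero'.mp h0).le
    calc ‖(√x)⁻¹ * x * (√x)⁻¹‖ = ‖(√x)⁻¹ * (√x * √x) * (√x)⁻¹‖ := by rw [hx]
      _ ≤ 1 := by
        rw [inv_mul_cancel_left₀ h0, mul_inv_cancel₀ h0, norm_one]
  · have hker : matFun (fun x => 1 - √x * (√x)⁻¹) (L * Lᴴ) * L = 0 := by
      rw [← self_mul_conjTranspose_eq_zero, matFun_mul_mul_conjTranspose,
        matFun_congr hP (g := fun _ => 0), matFun_eq_cfc, cfc_const_zero]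
      intro x hx
      rcases eq_or_ne x 0 with rfl | h0
      · simp
      · have : √x ≠ 0 := Real.sqrt_ne_zero'.mpr (hx.lt_of_ne' h0)
        simp [this]
    rw [matFun_sub, matFun_one hP.1, Matrix.sub_mul, Matrix.one_mul, sub_eq_zero] at hker
    rw [← Matrix.mul_assoc, msqrt, matFun_mul_matFun, ← hker]

lemma rtr_conjTranspose_mul_le_rtr_msqrt (R L : Matrix ι κ ℂ) :
    rtr (Rᴴ * L) ≤ rtr (msqrt (msqrt (L * Lᴴ) * (R * Rᴴ) * msqrt (L * Lᴴ))) := by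
  classical
  obtain ⟨Z, hZ, hL⟩ := exists_msqrt_mul_eq L
  set s := msqrt (L * Lᴴ)
  have hsH : sᴴ = s := conjTranspose_msqrt _
  have hsR : s * (R * Rᴴ) * s = (s * R) * (s * R)ᴴ := by
    rw [conjTranspose_mul, hsH]
    simp only [Matrix.mul_assoc]
  obtain ⟨Y, hY, hR⟩ := exists_msqrt_mul_eq (s * R)
  rw [hsR]
  set m := msqrt ((s * R) * (s * R)ᴴ)
  have hm : m.PosSemidef :=
    posSemidef_matFun (posSemidef_self_mul_conjTranspose _) fun x _ => Real.sqrt_nonneg x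
  have hmH : mᴴ = m := conjTranspose_msqrt _
  calc rtr (Rᴴ * L) = rtr ((s * R)ᴴ * Z) := by
        rw [← hL, conjTranspose_mul, hsH, Matrix.mul_assoc]
    _ = rtr (Z * Yᴴ * m) := by
        rw [← hR, conjTranspose_mul, hmH, rtr_mul_comm, ← Matrix.mul_assoc, rtr_mul_comm]
    _ ≤ ‖Z * Yᴴ‖ * rtr m := rtr_mul_le_norm_mul_rtr _ hm
    _ ≤ 1 * rtr m := by
        gcongr
        · exact (Complex.le_def.mp hm.trace_nonneg).1
        · calc ‖Z * Yᴴ‖ ≤ ‖Z‖ * ‖Yᴴ‖ := l2_opNorm_mul _ _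
            _ ≤ 1 := mul_le_one₀ hZ (norm_nonneg _) (by rwa [l2_opNorm_conjTranspose])
    _ = rtr m := one_mul _

/-- The easy half of Uhlmann's theorem. -/
theorem sq_rtr_conjTranspose_mul_le_fidelity (R L : Matrix ι κ ℂ) :
    rtr (Rᴴ * L) ^ 2 ≤ fidelity (R * Rᴴ) (L * Lᴴ) := by
  have hL := rtr_conjTranspose_mul_le_rtr_msqrt R L
  have hnegL := rtr_conjTranspose_mul_le_rtr_msqrt R (-L)
  rw [conjTranspose_neg, Matrix.neg_mul, Matrix.mul_neg, Matrix.mul_neg, neg_neg, rtr, trace_neg,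
    Complex.neg_re] at hnegL
  exact sq_le_sq' (neg_le.mp hnegL) hL

end Fidelity

section Smoothing

open Matrix

lemma dMax_le_logb {ι : Type} {ρ σ : Matrix ι ι ℂ} {c : ℝ} (hc : 0 < c)
    (h : loewnerLE ρ ((c : ℂ) • σ)) : dMax ρ σ ≤ (Real.logb 2 c : ℝ) :=
  sInf_le ⟨Real.logb 2 c, rfl, by rwa [Real.rpow_logb two_pos (by norm_num) hc]⟩

variable {ι κ : Type} [Fintype ι] [Fintype κ]

lemma ofReal_rtr {A : Matrix ι ι ℂ} (hA : A.PosSemidef) : (rtr A : ℂ) = A.trace :=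
  Complex.conj_eq_iff_re.mp <|
    Complex.conj_eq_iff_im.mpr (Complex.nonneg_iff.mp hA.trace_nonneg).2.symm

lemma ofReal_rtr_mul {A B : Matrix ι ι ℂ} (hA : A.IsHermitian) (hB : B.IsHermitian) :
    (rtr (A * B) : ℂ) = (A * B).trace := by
  rw [rtr, ← Complex.conj_eq_iff_re, starRingEnd_apply, ← trace_conjTranspose, conjTranspose_mul,
    hA, hB, trace_mul_comm]

variable [DecidableEq ι]

lemma sineDist_le_of_le_fidelity {ρ ρ' : Matrix ι ι ℂ} {ε : ℝ} (hε : 0 ≤ ε)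
    (h : 1 - ε ^ 2 ≤ fidelity ρ ρ') : sineDist ρ ρ' ≤ ε :=
  Real.sqrt_le_iff.mpr ⟨hε, by linarith⟩

lemma dMaxSmooth_le_of_factor {R L : Matrix ι κ ℂ} {σ : Matrix ι ι ℂ} {ε c : ℝ}
    (hε : 0 ≤ ε) (hc : 0 < c) (htr : 0 < rtr (L * Lᴴ))
    (hF : (1 - ε ^ 2) * rtr (L * Lᴴ) ≤ rtr (Rᴴ * L) ^ 2)
    (hσ : loewnerLE (L * Lᴴ) ((c : ℂ) • σ)) :
    dMaxSmooth ε (R * Rᴴ) σ ≤ (Real.logb 2 (c / rtr (L * Lᴴ)) : ℝ) := by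
  set τ := rtr (L * Lᴴ)
  set N : Matrix ι κ ℂ := (((√τ)⁻¹ : ℝ) : ℂ) • L with hN
  have hNN : N * Nᴴ = ((τ⁻¹ : ℝ) : ℂ) • (L * Lᴴ) := by
    rw [hN, conjTranspose_smul, Matrix.smul_mul, Matrix.mul_smul, smul_smul, Complex.star_def,
      Complex.conj_ofReal, ← Complex.ofReal_mul, ← mul_inv, Real.mul_self_sqrt htr.le]
  have hstate : IsState (N * Nᴴ) := by
    refine ⟨posSemidef_self_mul_conjTranspose N, ?_⟩
    rw [hNN, trace_smul, ← ofReal_rtr (posSemidef_self_mul_conjTranspose L), smul_eq_mul,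
      ← Complex.ofReal_mul, inv_mul_cancel₀ htr.ne', Complex.ofReal_one]
  have hRN : rtr (Rᴴ * N) ^ 2 = rtr (Rᴴ * L) ^ 2 / τ := by
    rw [hN, Matrix.mul_smul, rtr, trace_smul, smul_eq_mul, Complex.re_ofReal_mul, ← rtr, mul_pow,
      inv_pow, Real.sq_sqrt htr.le, inv_mul_eq_div]
  have hclose : sineDist (R * Rᴴ) (N * Nᴴ) ≤ ε := by
    refine sineDist_le_of_le_fidelity hε (le_trans ?_ (sq_rtr_conjTranspose_mul_le_fidelity R N))
    rwa [hRN, le_div_iff₀ htr]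
  have hdom : loewnerLE (N * Nᴴ) (((c / τ : ℝ) : ℂ) • σ) := by
    have := hσ.smul (a := ((τ⁻¹ : ℝ) : ℂ)) (by exact_mod_cast (inv_pos.mpr htr).le)
    rwa [smul_sub, smul_smul, ← hNN, ← Complex.ofReal_mul, inv_mul_eq_div] at this
  exact iInf₂_le_of_le _ ⟨hstate, hclose⟩ (dMax_le_logb (div_pos hc htr) hdom)

end Smoothing

section NussbaumSzkola

open Matrix

variable {ι : Type} [Fintype ι] [DecidableEq ι] {ρ σ : Matrix ι ι ℂ}

lemma mpow_zero (A : Matrix ι ι ℂ) : mpow A 0 = matFun (fun x => x⁻¹ * x) A := by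
  rw [mpow]
  congr 1
  ext x
  split_ifs with h <;> simp [h]

lemma suppLE_iff_mul_mpow_zero (hσ : σ.IsHermitian) : SuppLE ρ σ ↔ ρ * mpow σ 0 = ρ := by
  have hpow : matFun (fun x => x⁻¹) σ * σ = mpow σ 0 := by
    conv_lhs => enter [2]; rw [← matFun_id hσ]
    rw [matFun_mul_matFun, mpow_zero]
  have hker : σ * mpow σ 0 = σ := by
    conv_lhs => enter [1]; rw [← matFun_id hσ]
    rw [mpow_zero, matFun_mul_matFun]
    conv_rhs => rw [← matFun_id hσ]
    congr 1
    ext x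
    rw [← mul_assoc, mul_inv_mul_cancel]
  constructor
  · intro h
    refine Matrix.ext_of_mulVec_single fun i => ?_
    rw [← sub_eq_zero, ← mulVec_mulVec, ← mulVec_sub]
    apply h
    rw [mulVec_sub, mulVec_mulVec, hker, sub_self]
  · intro h v hv
    rw [← h, ← hpow, ← mulVec_mulVec, ← mulVec_mulVec, hv, mulVec_zero, mulVec_zero]

/-- The unitary whose `(j, i)` entry is the inner product of the `j`-th eigenvector of `σ` with the
`i`-th eigenvector of `ρ`. -/
def eigenOverlap (hρ : ρ.IsHermitian) (hσ : σ.IsHermitian) : Matrix ι ι ℂ :=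
  (hσ.eigenvectorUnitary : Matrix ι ι ℂ)ᴴ * (hρ.eigenvectorUnitary : Matrix ι ι ℂ)

/-- The first Nussbaum–Szkoła distribution of `(ρ, σ)`, of mass `‖⟨v_j, u_i⟩‖² p_i` at `(j, i)`. -/
def nsWeight (hρ : ρ.IsHermitian) (hσ : σ.IsHermitian) (k : ι × ι) : ℝ :=
  ‖eigenOverlap hρ hσ k.1 k.2‖ ^ 2 * hρ.eigenvalues k.2

/-- The log-likelihood ratio, in nats, of the two Nussbaum–Szkoła distributions of `(ρ, σ)`. It
carries junk values at zero eigenvalues, where `nsWeight` vanishes as soon as `SuppLE ρ σ`. -/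
def nsLogRatio (hρ : ρ.IsHermitian) (hσ : σ.IsHermitian) (k : ι × ι) : ℝ :=
  Real.log (hρ.eigenvalues k.2) - Real.log (hσ.eigenvalues k.1)

lemma matFun_eq_conj (hρ : ρ.IsHermitian) (f : ℝ → ℝ) : matFun f ρ =
    (hρ.eigenvectorUnitary : Matrix ι ι ℂ) * diagonal (fun i => (f (hρ.eigenvalues i) : ℂ)) *
      (hρ.eigenvectorUnitary : Matrix ι ι ℂ)ᴴ := by
  rw [matFun, dif_pos hρ, star_eq_conjTranspose]

lemma rtr_matFun_mul_matFun (hρ : ρ.IsHermitian) (hσ : σ.IsHermitian) (f g : ℝ → ℝ) :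
    rtr (matFun f ρ * matFun g σ) = ∑ k : ι × ι, ‖eigenOverlap hρ hσ k.1 k.2‖ ^ 2 *
      (f (hρ.eigenvalues k.2) * g (hσ.eigenvalues k.1)) := by
  set W := eigenOverlap hρ hσ with hW
  have hcycle : rtr (matFun f ρ * matFun g σ) =
      rtr (W * diagonal (fun i => (f (hρ.eigenvalues i) : ℂ)) *
        (Wᴴ * diagonal (fun j => (g (hσ.eigenvalues j) : ℂ)))) := by
    rw [hW, eigenOverlap, conjTranspose_mul, conjTranspose_conjTranspose, matFun_eq_conj hρ,
      matFun_eq_conj hσ, ← Matrix.mul_assoc _ _ (_ᴴ), rtr_mul_comm]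
    simp only [Matrix.mul_assoc]
  rw [hcycle, rtr, Matrix.trace, Complex.re_sum, Fintype.sum_prod_type]
  refine Finset.sum_congr rfl fun j _ => ?_
  rw [diag_apply, mul_apply, Complex.re_sum]
  refine Finset.sum_congr rfl fun i _ => ?_
  rw [mul_diagonal, mul_diagonal, conjTranspose_apply, mul_mul_mul_comm, Complex.star_def,
    Complex.mul_conj']
  norm_cast

lemma nsWeight_nonneg (hρ : ρ.PosSemidef) (hσ : σ.IsHermitian) (k : ι × ι) :
    0 ≤ nsWeight hρ.1 hσ k :=
  mul_nonneg (sq_nonneg _) (hρ.eigenvalues_nonneg _)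

lemma rtr_mul_matFun (hρ : ρ.IsHermitian) (hσ : σ.IsHermitian) (g : ℝ → ℝ) :
    rtr (ρ * matFun g σ) = ∑ k, nsWeight hρ hσ k * g (hσ.eigenvalues k.1) := by
  conv_lhs => rw [← matFun_id hρ]
  simp only [rtr_matFun_mul_matFun hρ hσ, nsWeight, mul_assoc]

lemma sum_nsWeight (hρ : ρ.IsHermitian) (hσ : σ.IsHermitian) :
    ∑ k, nsWeight hρ hσ k = rtr ρ := by
  simpa [matFun_one hσ] using (rtr_mul_matFun hρ hσ fun _ => 1).symm

lemma nsWeight_eq_zero (hρ : ρ.PosSemidef) (hσ : σ.IsHermitian) (h : SuppLE ρ σ) {k : ι × ι}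
    (hk : hσ.eigenvalues k.1 = 0) : nsWeight hρ.1 hσ k = 0 := by
  have hsum : ∑ k, nsWeight hρ.1 hσ k * (1 - (hσ.eigenvalues k.1)⁻¹ * hσ.eigenvalues k.1) = 0 := by
    rw [← rtr_mul_matFun hρ.1 hσ (fun x => 1 - x⁻¹ * x), matFun_sub, matFun_one hσ, ← mpow_zero,
      Matrix.mul_sub, Matrix.mul_one, (suppLE_iff_mul_mpow_zero hσ).mp h, sub_self, rtr,
      Matrix.trace_zero, Complex.zero_re]
  rw [Fintype.sum_eq_zero_iff_of_nonneg] at hsum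
  · simpa [hk] using congrFun hsum k
  · intro k
    refine mul_nonneg (nsWeight_nonneg hρ hσ k) (sub_nonneg.mpr inv_mul_le_one)

/-- The Petz quasi-divergence `Tr[ρ^α σ^(1-α)]`. -/
def petzQuasi (α : ℝ) (ρ σ : Matrix ι ι ℂ) : ℝ := rtr (mpow ρ α * mpow σ (1 - α))

lemma petzQuasi_eq_sum (hρ : ρ.PosSemidef) (hσ : σ.PosSemidef) (h : SuppLE ρ σ) (t : ℝ) :
    petzQuasi (1 + t) ρ σ = ∑ k, nsWeight hρ.1 hσ.1 k * Real.exp (t * nsLogRatio hρ.1 hσ.1 k) := by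
  rw [petzQuasi, mpow, mpow, rtr_matFun_mul_matFun hρ.1 hσ.1]
  refine Finset.sum_congr rfl fun k _ => ?_
  rw [nsLogRatio]
  have hz := nsWeight_eq_zero hρ hσ.1 h (k := k)
  rw [nsWeight] at hz ⊢
  set p := hρ.1.eigenvalues k.2
  set q := hσ.1.eigenvalues k.1
  rcases eq_or_ne p 0 with hp | hp
  · simp [hp]
  rcases eq_or_ne q 0 with hq | hq
  · simp [hz hq, hq]
  have hp' : 0 < p := (hρ.eigenvalues_nonneg _).lt_of_ne' hp
  have hq' : 0 < q := (hσ.eigenvalues_nonneg _).lt_of_ne' hq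
  rw [if_neg hp, if_neg hq, Real.rpow_add hp', Real.rpow_one, Real.rpow_def_of_pos hp',
    Real.rpow_def_of_pos hq', mul_assoc, mul_assoc, ← Real.exp_add]
  ring_nf

lemma relEntropy_eq_sum (hρ : ρ.IsHermitian) (hσ : σ.IsHermitian) (h : SuppLE ρ σ) :
    relEntropy ρ σ =
      ((∑ k, nsWeight hρ hσ k * nsLogRatio hρ hσ k) / Real.log 2 : ℝ) := by
  have hlog : rtr (ρ * mlog ρ) = ∑ k, nsWeight hρ hσ k * Real.logb 2 (hρ.eigenvalues k.2) := by
    have := rtr_matFun_mul_matFun hρ hσ (fun x => x * Real.logb 2 x) fun _ => 1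
    rw [← matFun_mul_matFun, matFun_id hρ, matFun_one hσ, Matrix.mul_one] at this
    simpa only [mlog, nsWeight, mul_one, mul_assoc] using this
  rw [relEntropy, if_pos h, Matrix.mul_sub, rtr, Matrix.trace_sub, Complex.sub_re, ← rtr, ← rtr,
    hlog, mlog, rtr_mul_matFun hρ hσ, ← Finset.sum_sub_distrib, Finset.sum_div]
  simp only [nsLogRatio, Real.logb, ← mul_sub, ← sub_div, mul_div_assoc]

end NussbaumSzkola

section OneShot

open Matrix
open scoped Matrix.Norms.L2Operator

open scoped MatrixOrder in
lemma loewnerLE_mul_mul_conjTranspose {ι κ : Type} [Finite ι] [Fintype κ] [DecidableEq κ]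
    (S : Matrix ι κ ℂ) {T : Matrix κ κ ℂ} {c : ℝ} (hT : ‖T‖ ≤ c) :
    loewnerLE (S * T * (S * T)ᴴ) (((c ^ 2 : ℝ) : ℂ) • (S * Sᴴ)) := by
  have hTT : (((c ^ 2 : ℝ) : ℂ) • 1 - T * Tᴴ).PosSemidef := by
    rw [← Matrix.le_iff]
    calc T * Tᴴ ≤ algebraMap ℝ _ (‖T‖ ^ 2) := CStarAlgebra.mul_star_le_algebraMap_norm_sq
      _ ≤ algebraMap ℝ _ (c ^ 2) := by gcongr
      _ = _ := by rw [Algebra.algebraMap_eq_smul_one, Complex.coe_smul]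
  have := hTT.mul_mul_conjTranspose_same S
  rw [loewnerLE]
  simpa only [conjTranspose_mul, Matrix.mul_sub, Matrix.sub_mul, Matrix.mul_smul, Matrix.smul_mul,
    Matrix.mul_one, Matrix.mul_assoc] using this

lemma rtr_conjTranspose_mul {ι κ : Type} [Fintype ι] [Fintype κ] (B C : Matrix κ ι ℂ) :
    rtr (Bᴴ * C) = ∑ k : κ × ι, (star (B k.1 k.2) * C k.1 k.2).re := by
  simp only [rtr, Matrix.trace, diag_apply, mul_apply, conjTranspose_apply, Complex.re_sum]
  rw [Finset.sum_comm, Fintype.sum_prod_type]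

lemma rtr_conjTranspose_mul_self {ι κ : Type} [Fintype ι] [Fintype κ] (B : Matrix κ ι ℂ) :
    rtr (Bᴴ * B) = ∑ k : κ × ι, ‖B k.1 k.2‖ ^ 2 := by
  simp only [rtr_conjTranspose_mul, Complex.star_def, Complex.conj_mul', ← Complex.ofReal_pow,
    Complex.ofReal_re]

variable {ι : Type} [Fintype ι] [DecidableEq ι] {ρ σ : Matrix ι ι ℂ}

lemma l2_opNorm_le_one_of_conjTranspose_mul_self {U : Matrix ι ι ℂ} (hU : Uᴴ * U = 1) :
    ‖U‖ ≤ 1 := by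
  rw [← sq_le_one_iff₀ (norm_nonneg U), sq, ← l2_opNorm_conjTranspose_mul_self, hU,
    ← diagonal_one, l2_opNorm_diagonal]
  exact (pi_norm_const_le (1 : ℂ)).trans_eq norm_one

lemma norm_eigenOverlap_le (hρ : ρ.IsHermitian) (hσ : σ.IsHermitian) :
    ‖eigenOverlap hρ hσ‖ ≤ 1 := by
  refine l2_opNorm_le_one_of_conjTranspose_mul_self ?_
  exact Unitary.coe_star_mul_self (star hσ.eigenvectorUnitary * hρ.eigenvectorUnitary)

/-- The square root `U √P` of `ρ = U P Uᴴ`, with rows in the standard basis and columns in the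
eigenbasis. -/
def eigenSqrt (hρ : ρ.IsHermitian) : Matrix ι ι ℂ :=
  (hρ.eigenvectorUnitary : Matrix ι ι ℂ) * diagonal (fun i => ((√(hρ.eigenvalues i) : ℝ) : ℂ))

lemma eigenSqrt_mul_conjTranspose (hρ : ρ.PosSemidef) : eigenSqrt hρ.1 * (eigenSqrt hρ.1)ᴴ = ρ := by
  have (i : ι) : ((√(hρ.1.eigenvalues i) : ℝ) : ℂ) * (√(hρ.1.eigenvalues i) : ℝ) =
      hρ.1.eigenvalues i := by
    exact_mod_cast Real.mul_self_sqrt (hρ.eigenvalues_nonneg i)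
  conv_rhs => rw [← matFun_id hρ.1, matFun_eq_conj hρ.1]
  rw [eigenSqrt, conjTranspose_mul, diagonal_conjTranspose, Matrix.mul_assoc,
    ← Matrix.mul_assoc (diagonal _), diagonal_mul_diagonal, ← Matrix.mul_assoc]
  simp only [Pi.star_apply, Complex.star_def, Complex.conj_ofReal, this]

/-- The relaxed indicator `q / (q + μ p)` of the event that the likelihood ratio `p / q` of the
Nussbaum–Szkoła distributions is at most `1 / μ`. -/
def nsFilter (hρ : ρ.IsHermitian) (hσ : σ.IsHermitian) (μ : ℝ) (k : ι × ι) : ℝ :=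
  hσ.eigenvalues k.1 / (hσ.eigenvalues k.1 + μ * hρ.eigenvalues k.2)

lemma nsFilter_nonneg (hρ : ρ.PosSemidef) (hσ : σ.PosSemidef) {μ : ℝ} (hμ : 0 ≤ μ) (k : ι × ι) :
    0 ≤ nsFilter hρ.1 hσ.1 μ k :=
  div_nonneg (hσ.eigenvalues_nonneg _)
    (add_nonneg (hσ.eigenvalues_nonneg _) (mul_nonneg hμ (hρ.eigenvalues_nonneg _)))

lemma nsFilter_le_one (hρ : ρ.PosSemidef) (hσ : σ.PosSemidef) {μ : ℝ} (hμ : 0 ≤ μ) (k : ι × ι) :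
    nsFilter hρ.1 hσ.1 μ k ≤ 1 :=
  div_le_one_of_le₀ (le_add_of_nonneg_right (mul_nonneg hμ (hρ.eigenvalues_nonneg _)))
    (add_nonneg (hσ.eigenvalues_nonneg _) (mul_nonneg hμ (hρ.eigenvalues_nonneg _)))

/-- A factor `L` with `L Lᴴ ≤ σ / 4` whose overlap with the factor `eigenSqrt ρ` of `ρ` is `√μ`
times the mass of `nsFilter` under `nsWeight`. -/
def filteredFactor (hρ : ρ.IsHermitian) (hσ : σ.IsHermitian) (μ : ℝ) : Matrix ι ι ℂ :=
  eigenSqrt hσ * geomMeanMultiplier hσ.eigenvalues (fun i => μ * hρ.eigenvalues i)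
    (eigenOverlap hρ hσ)

lemma loewnerLE_filteredFactor (hρ : ρ.PosSemidef) (hσ : σ.PosSemidef) {μ : ℝ} (hμ : 0 ≤ μ) :
    loewnerLE (filteredFactor hρ.1 hσ.1 μ * (filteredFactor hρ.1 hσ.1 μ)ᴴ)
      ((((1 / 2) ^ 2 : ℝ) : ℂ) • σ) := by
  have hT : ‖geomMeanMultiplier hσ.1.eigenvalues (fun i => μ * hρ.1.eigenvalues i)
      (eigenOverlap hρ.1 hσ.1)‖ ≤ 1 / 2 :=
    calc _ ≤ ‖eigenOverlap hρ.1 hσ.1‖ * (1 / 2) :=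
          norm_geomMeanMultiplier_le hσ.eigenvalues_nonneg
            (fun i => mul_nonneg hμ (hρ.eigenvalues_nonneg i)) _
      _ ≤ 1 * (1 / 2) := by gcongr; exact norm_eigenOverlap_le _ _
      _ = 1 / 2 := one_mul _
  have := loewnerLE_mul_mul_conjTranspose (eigenSqrt hσ.1) hT
  rwa [eigenSqrt_mul_conjTranspose hσ] at this

lemma rtr_filteredFactor (hρ : ρ.PosSemidef) (hσ : σ.PosSemidef) {μ : ℝ} (hμ : 0 ≤ μ) :
    rtr (filteredFactor hρ.1 hσ.1 μ * (filteredFactor hρ.1 hσ.1 μ)ᴴ) =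
      μ * ∑ k, nsWeight hρ.1 hσ.1 k * nsFilter hρ.1 hσ.1 μ k ^ 2 := by
  have hV : (hσ.1.eigenvectorUnitary : Matrix ι ι ℂ)ᴴ * hσ.1.eigenvectorUnitary = 1 :=
    Unitary.coe_star_mul_self hσ.1.eigenvectorUnitary
  rw [rtr_mul_comm, filteredFactor, eigenSqrt, Matrix.mul_assoc, conjTranspose_mul,
    Matrix.mul_assoc, ← Matrix.mul_assoc _ᴴ (hσ.1.eigenvectorUnitary : Matrix ι ι ℂ), hV,
    Matrix.one_mul, rtr_conjTranspose_mul_self, Finset.mul_sum]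
  refine Finset.sum_congr rfl fun k _ => ?_
  rw [diagonal_mul, geomMeanMultiplier, of_apply, norm_mul, norm_mul, Complex.norm_real,
    Complex.norm_real, Real.norm_eq_abs, Real.norm_eq_abs, mul_pow, mul_pow, sq_abs, sq_abs,
    div_pow, mul_pow, Real.sq_sqrt (hσ.eigenvalues_nonneg _),
    Real.sq_sqrt (mul_nonneg hμ (hρ.eigenvalues_nonneg _)), nsWeight, nsFilter, div_pow]
  ring

lemma rtr_eigenSqrt_filteredFactor (hρ : ρ.PosSemidef) (hσ : σ.PosSemidef) {μ : ℝ} (hμ : 0 ≤ μ) :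
    rtr ((eigenSqrt hρ.1)ᴴ * filteredFactor hρ.1 hσ.1 μ) =
      √μ * ∑ k, nsWeight hρ.1 hσ.1 k * nsFilter hρ.1 hσ.1 μ k := by
  have hgram : (eigenSqrt hρ.1)ᴴ * eigenSqrt hσ.1 =
      (diagonal (fun j => ((√(hσ.1.eigenvalues j) : ℝ) : ℂ)) * eigenOverlap hρ.1 hσ.1 *
        diagonal (fun i => ((√(hρ.1.eigenvalues i) : ℝ) : ℂ)))ᴴ := by
    simp only [eigenSqrt, eigenOverlap, conjTranspose_mul, conjTranspose_conjTranspose,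
      diagonal_conjTranspose, Matrix.mul_assoc, Pi.star_def, Complex.star_def, Complex.conj_ofReal]
  rw [filteredFactor, ← Matrix.mul_assoc, hgram, rtr_conjTranspose_mul, Finset.mul_sum]
  refine Finset.sum_congr rfl fun k _ => ?_
  rw [mul_diagonal, diagonal_mul, geomMeanMultiplier, of_apply, nsWeight, nsFilter]
  set w := eigenOverlap hρ.1 hσ.1 k.1 k.2
  set p := hρ.1.eigenvalues k.2
  set q := hσ.1.eigenvalues k.1
  have hp : √p * √p = p := Real.mul_self_sqrt (hρ.eigenvalues_nonneg _)
  have hq : √q * √q = q := Real.mul_self_sqrt (hσ.eigenvalues_nonneg _)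
  calc (star ((√q : ℂ) * w * √p) * (((√q * √(μ * p) / (q + μ * p) : ℝ) : ℂ) * w)).re
      = ((((√q * √q) * (√p * √p) * √μ / (q + μ * p) : ℝ) : ℂ) * (star w * w)).re := by
        rw [Real.sqrt_mul hμ]
        simp only [star_mul', Complex.star_def, Complex.conj_ofReal]
        push_cast
        ring_nf
    _ = √μ * (‖w‖ ^ 2 * p * (q / (q + μ * p))) := by
        rw [hp, hq, Complex.star_def, Complex.conj_mul', Complex.re_ofReal_mul,
          ← Complex.ofReal_pow, Complex.ofReal_re]
        ring

lemma two_mul_sum_mul_sub_one_le_sum_mul_sq {κ : Type*} {s : Finset κ} {P : κ → ℝ}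
    (hP : ∀ k ∈ s, 0 ≤ P k) (hs : ∑ k ∈ s, P k = 1) (g : κ → ℝ) :
    2 * ∑ k ∈ s, P k * g k - 1 ≤ ∑ k ∈ s, P k * g k ^ 2 :=
  calc 2 * ∑ k ∈ s, P k * g k - 1 = ∑ k ∈ s, P k * (2 * g k - 1) := by
        simp only [mul_sub, mul_one, mul_left_comm _ (2 : ℝ), Finset.sum_sub_distrib,
          ← Finset.mul_sum, hs]
    _ ≤ ∑ k ∈ s, P k * g k ^ 2 := Finset.sum_le_sum fun k hk =>
        mul_le_mul_of_nonneg_left (by linarith [sq_nonneg (g k - 1)]) (hP k hk)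

theorem dMaxSmooth_le_of_filter (hρ : IsState ρ) (hσ : σ.PosSemidef) {μ ε : ℝ} (hμ : 0 < μ)
    (hε : 0 ≤ ε) (hε1 : ε < 1)
    (hfilter : 1 - ε ^ 2 / 2 ≤ ∑ k, nsWeight hρ.1.1 hσ.1 k * nsFilter hρ.1.1 hσ.1 μ k) :
    dMaxSmooth ε ρ σ ≤ (Real.logb 2 (1 / μ) + Real.logb 2 (1 / (1 - ε ^ 2)) : ℝ) := by
  set P := nsWeight hρ.1.1 hσ.1
  set g := nsFilter hρ.1.1 hσ.1 μ
  set M := ∑ k, P k * g k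
  set N := ∑ k, P k * g k ^ 2 with hN
  have hε2 : 0 < 1 - ε ^ 2 := by nlinarith
  have hP k : 0 ≤ P k := nsWeight_nonneg hρ.1 hσ.1 k
  have hsum : ∑ k, P k = 1 := (sum_nsWeight _ _).trans (by rw [rtr, hρ.2, Complex.one_re])
  have hg0 k : 0 ≤ g k := nsFilter_nonneg hρ.1 hσ hμ.le k
  have hg1 k : g k ≤ 1 := nsFilter_le_one hρ.1 hσ hμ.le k
  have hNM : N ≤ M := Finset.sum_le_sum fun k _ =>
    mul_le_mul_of_nonneg_left (pow_le_of_le_one (hg0 k) (hg1 k) two_ne_zero) (hP k)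
  have hMN : 2 * M - 1 ≤ N := two_mul_sum_mul_sub_one_le_sum_mul_sq (fun k _ => hP k) hsum g
  have hN0 : 0 < N := by linarith
  have htr := rtr_filteredFactor hρ.1 hσ hμ.le
  have hov := rtr_eigenSqrt_filteredFactor hρ.1 hσ hμ.le
  have hF : (1 - ε ^ 2) * (μ * N) ≤ (√μ * M) ^ 2 := by
    rw [mul_pow, Real.sq_sqrt hμ.le, mul_left_comm]
    gcongr
    nlinarith
  have := dMaxSmooth_le_of_factor hε (by norm_num) (by rw [htr]; positivity)
    (by rw [htr, hov]; exact hF) (loewnerLE_filteredFactor hρ.1 hσ hμ.le)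
  rw [eigenSqrt_mul_conjTranspose hρ.1, htr] at this
  refine this.trans (EReal.coe_le_coe_iff.mpr ?_)
  rw [← Real.logb_mul (by positivity) (by positivity)]
  refine Real.logb_le_logb_of_le one_lt_two (by positivity) ?_
  rw [div_mul_div_comm, ← hN]
  gcongr
  · norm_num
  · linarith

lemma div_one_add_le_rpow {r δ : ℝ} (hr : 0 < r) (hδ : 0 ≤ δ) (hδ1 : δ ≤ 1) :
    r / (1 + r) ≤ r ^ δ := by
  rcases le_total r 1 with h | h
  · calc r / (1 + r) ≤ r := div_le_self hr.le (by linarith)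
      _ ≤ r ^ δ := Real.self_le_rpow_of_le_one hr.le h hδ1
  · calc r / (1 + r) ≤ 1 := div_le_one_of_le₀ (by linarith) (by linarith)
      _ ≤ r ^ δ := Real.one_le_rpow h hδ

lemma nsWeight_mul_one_sub_nsFilter_le (hρ : ρ.PosSemidef) (hσ : σ.PosSemidef) (h : SuppLE ρ σ)
    {μ δ : ℝ} (hμ : 0 < μ) (hδ : 0 ≤ δ) (hδ1 : δ ≤ 1) (k : ι × ι) :
    nsWeight hρ.1 hσ.1 k * (1 - nsFilter hρ.1 hσ.1 μ k) ≤
      μ ^ δ * (nsWeight hρ.1 hσ.1 k * Real.exp (δ * nsLogRatio hρ.1 hσ.1 k)) := by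
  have hw := nsWeight_nonneg hρ hσ.1 k
  rcases (hσ.eigenvalues_nonneg k.1).eq_or_lt' with hq | hq
  · simp [nsWeight_eq_zero hρ hσ.1 h hq]
  rcases (hρ.eigenvalues_nonneg k.2).eq_or_lt' with hp | hp
  · simp [nsWeight, hp]
  rw [nsFilter, nsLogRatio]
  set p := hρ.1.eigenvalues k.2
  set q := hσ.1.eigenvalues k.1
  have hr : 0 < μ * p / q := by positivity
  have hfilter : 1 - q / (q + μ * p) = μ * p / q / (1 + μ * p / q) := by
    field_simp
    ring
  have hpow : (μ * p / q) ^ δ = μ ^ δ * Real.exp (δ * (Real.log p - Real.log q)) := by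
    rw [mul_div_assoc, Real.mul_rpow hμ.le (by positivity), Real.rpow_def_of_pos (div_pos hp hq),
      Real.log_div hp.ne' hq.ne', mul_comm δ]
  rw [mul_left_comm, ← hpow, hfilter]
  exact mul_le_mul_of_nonneg_left (div_one_add_le_rpow hr hδ hδ1) hw

lemma one_sub_le_sum_nsFilter (hρ : IsState ρ) (hσ : σ.PosSemidef) (h : SuppLE ρ σ)
    {μ δ : ℝ} (hμ : 0 < μ) (hδ : 0 ≤ δ) (hδ1 : δ ≤ 1) :
    1 - μ ^ δ * petzQuasi (1 + δ) ρ σ ≤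
      ∑ k, nsWeight hρ.1.1 hσ.1 k * nsFilter hρ.1.1 hσ.1 μ k := by
  have hsum := Finset.sum_le_sum fun k (_ : k ∈ Finset.univ) =>
    nsWeight_mul_one_sub_nsFilter_le hρ.1 hσ h hμ hδ hδ1 k
  simp only [mul_sub, mul_one, Finset.sum_sub_distrib, sum_nsWeight, ← Finset.mul_sum,
    ← petzQuasi_eq_sum hρ.1 hσ h, rtr, hρ.2, Complex.one_re] at hsum
  linarith

lemma petzQuasi_pos (hρ : IsState ρ) (hσ : σ.PosSemidef) (h : SuppLE ρ σ) (t : ℝ) :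
    0 < petzQuasi (1 + t) ρ σ := by
  have hsum : 0 < ∑ k, nsWeight hρ.1.1 hσ.1 k := by
    rw [sum_nsWeight, rtr, hρ.2]
    exact one_pos
  obtain ⟨k, -, hk⟩ := Finset.exists_lt_of_sum_lt (Finset.sum_const_zero.trans_lt hsum)
  rw [petzQuasi_eq_sum hρ.1 hσ h]
  exact Finset.sum_pos' (fun k _ => mul_nonneg (nsWeight_nonneg hρ.1 hσ.1 k) (Real.exp_nonneg _))
    ⟨k, Finset.mem_univ k, mul_pos hk (Real.exp_pos _)⟩

lemma petzRenyi_one_add (hρ : IsState ρ) (hσ : σ.PosSemidef) (h : SuppLE ρ σ) (t : ℝ) :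
    petzRenyi (1 + t) ρ σ = (t⁻¹ * Real.logb 2 (petzQuasi (1 + t) ρ σ) : ℝ) := by
  rw [petzRenyi, if_neg fun hα => hα.2 h, ← petzQuasi, elog,
    if_neg (petzQuasi_pos hρ hσ h t).not_ge, add_sub_cancel_left, EReal.coe_mul]

theorem dMaxSmooth_le_petzRenyi (hρ : IsState ρ) (hσ : σ.PosSemidef) {δ ε : ℝ} (hδ : 0 < δ)
    (hδ1 : δ ≤ 1) (hε : 0 < ε) (hε1 : ε < 1) :
    dMaxSmooth ε ρ σ ≤ petzRenyi (1 + δ) ρ σ +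
      (Real.logb 2 (2 / ε ^ 2) / δ + Real.logb 2 (1 / (1 - ε ^ 2)) : ℝ) := by
  by_cases h : SuppLE ρ σ
  swap
  · rw [petzRenyi, if_pos ⟨by linarith, h⟩, EReal.top_add_coe]
    exact le_top
  have hQ := petzQuasi_pos hρ hσ h δ
  rw [petzRenyi_one_add hρ hσ h]
  set Q := petzQuasi (1 + δ) ρ σ with hQdef
  set μ := (ε ^ 2 / 2 / Q) ^ δ⁻¹ with hμdef
  have hμ : 0 < μ := by positivity
  have hμQ : μ ^ δ * Q = ε ^ 2 / 2 := by
    rw [Real.rpow_inv_rpow (by positivity) hδ.ne', div_mul_cancel₀ _ hQ.ne']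
  have hfilter := one_sub_le_sum_nsFilter hρ hσ h hμ hδ.le hδ1
  rw [← hQdef, hμQ] at hfilter
  refine (dMaxSmooth_le_of_filter hρ hσ hμ hε.le hε1 hfilter).trans_eq ?_
  have hlog : Real.logb 2 (1 / μ) = δ⁻¹ * (Real.logb 2 Q + Real.logb 2 (2 / ε ^ 2)) := by
    rw [← Real.logb_mul hQ.ne' (by positivity), one_div, hμdef, ← Real.inv_rpow (by positivity),
      Real.logb_rpow_eq_mul_logb_of_pos (by positivity), div_div, inv_div, mul_comm (2 : ℝ),
      mul_div_assoc]
  rw [hlog, ← EReal.coe_add, mul_add, add_assoc, ← div_eq_inv_mul _ δ, ← div_eq_inv_mul _ δ]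

end OneShot

section TensorPowers

open Matrix

variable {ι κ : Type} [Fintype ι] [DecidableEq ι] [Fintype κ] [DecidableEq κ]

lemma matFun_mul_eq_mul_diagonal {A : Matrix ι ι ℂ} (hA : A.IsHermitian) {X : Matrix ι κ ℂ}
    {d : κ → ℝ} (h : A * X = X * diagonal (fun k => (d k : ℂ))) (f : ℝ → ℝ) :
    matFun f A * X = X * diagonal (fun k => (f (d k) : ℂ)) := by
  have hU : (hA.eigenvectorUnitary : Matrix ι ι ℂ)ᴴ * hA.eigenvectorUnitary = 1 :=
    Unitary.coe_star_mul_self hA.eigenvectorUnitary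
  have hU' : (hA.eigenvectorUnitary : Matrix ι ι ℂ) * (hA.eigenvectorUnitary : Matrix ι ι ℂ)ᴴ = 1 :=
    Unitary.coe_mul_star_self hA.eigenvectorUnitary
  have hAU := matFun_eq_conj hA fun x => x
  rw [matFun_id hA] at hAU
  rw [matFun_eq_conj hA]
  set U := (hA.eigenvectorUnitary : Matrix ι ι ℂ)
  set a := hA.eigenvalues
  have hdiag : diagonal (fun i => (a i : ℂ)) * (Uᴴ * X) =
      Uᴴ * X * diagonal (fun k => (d k : ℂ)) := by
    rw [Matrix.mul_assoc Uᴴ, ← h, hAU]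
    simp only [← Matrix.mul_assoc, hU, Matrix.one_mul]
  have hfdiag : diagonal (fun i => (f (a i) : ℂ)) * (Uᴴ * X) =
      Uᴴ * X * diagonal (fun k => (f (d k) : ℂ)) := by
    ext i k
    have hik := congrFun₂ hdiag i k
    rw [diagonal_mul, mul_diagonal, mul_comm, mul_eq_mul_left_iff, Complex.ofReal_inj] at hik
    rw [diagonal_mul, mul_diagonal]
    rcases hik with hik | hik
    · rw [hik, mul_comm]
    · rw [hik, mul_zero, zero_mul]
  rw [Matrix.mul_assoc, Matrix.mul_assoc, hfdiag, ← Matrix.mul_assoc, ← Matrix.mul_assoc, hU',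
    Matrix.one_mul]

lemma matFun_mul_eigenvectorUnitary {A : Matrix ι ι ℂ} (hA : A.IsHermitian) (f : ℝ → ℝ) :
    matFun f A * hA.eigenvectorUnitary =
      hA.eigenvectorUnitary * diagonal (fun i => (f (hA.eigenvalues i) : ℂ)) := by
  rw [matFun_eq_conj hA, Matrix.mul_assoc, ← star_eq_conjTranspose,
    Unitary.coe_star_mul_self hA.eigenvectorUnitary, Matrix.mul_one]

lemma matFun_kronecker {A : Matrix ι ι ℂ} {B : Matrix κ κ ℂ} (hA : A.PosSemidef)
    (hB : B.PosSemidef) {f : ℝ → ℝ} (hf : ∀ x y, 0 ≤ x → 0 ≤ y → f (x * y) = f x * f y) :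
    matFun f (A ⊗ₖ B) = matFun f A ⊗ₖ matFun f B := by
  have hfA := matFun_mul_eigenvectorUnitary hA.1
  have hfB := matFun_mul_eigenvectorUnitary hB.1
  have hUV :
      ((hA.1.eigenvectorUnitary : Matrix ι ι ℂ) ⊗ₖ (hB.1.eigenvectorUnitary : Matrix κ κ ℂ)) *
      ((hA.1.eigenvectorUnitary : Matrix ι ι ℂ)ᴴ ⊗ₖ (hB.1.eigenvectorUnitary : Matrix κ κ ℂ)ᴴ) =
      1 := by
    rw [← mul_kronecker_mul, ← one_kronecker_one]
    exact congrArg₂ _ (Unitary.coe_mul_star_self _) (Unitary.coe_mul_star_self _)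
  set U := (hA.1.eigenvectorUnitary : Matrix ι ι ℂ)
  set V := (hB.1.eigenvectorUnitary : Matrix κ κ ℂ)
  set a := hA.1.eigenvalues
  set b := hB.1.eigenvalues
  have heig : (A ⊗ₖ B) * (U ⊗ₖ V) = (U ⊗ₖ V) * diagonal (fun k => ((a k.1 * b k.2 : ℝ) : ℂ)) := by
    have hA' := hfA fun x => x
    have hB' := hfB fun x => x
    rw [matFun_id hA.1] at hA'
    rw [matFun_id hB.1] at hB'
    rw [← mul_kronecker_mul, hA', hB', mul_kronecker_mul, diagonal_kronecker_diagonal]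
    simp only [Complex.ofReal_mul]
  have hfeig := matFun_mul_eq_mul_diagonal (hA.kronecker hB).1 heig f
  have hf' : matFun f (A ⊗ₖ B) * (U ⊗ₖ V) = (matFun f A ⊗ₖ matFun f B) * (U ⊗ₖ V) := by
    rw [hfeig, ← mul_kronecker_mul, hfA, hfB, mul_kronecker_mul, diagonal_kronecker_diagonal]
    simp only [hf _ _ (hA.eigenvalues_nonneg _) (hB.eigenvalues_nonneg _), Complex.ofReal_mul, a, b]
  rw [← Matrix.mul_one (matFun f (A ⊗ₖ B)), ← hUV, ← Matrix.mul_assoc, hf', Matrix.mul_assoc, hUV,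
    Matrix.mul_one]

lemma trace_tpowMat (A : Matrix ι ι ℂ) : ∀ k, (tpowMat A k).trace = A.trace ^ k
  | 0 => by
    rw [pow_zero]
    exact Fintype.sum_unique (ι := PUnit) fun _ => (1 : ℂ)
  | k + 1 => by
    rw [pow_succ, ← trace_tpowMat A k]
    exact trace_kronecker _ _

lemma tpowMat_mul (A B : Matrix ι ι ℂ) : ∀ k, tpowMat (A * B) k = tpowMat A k * tpowMat B k
  | 0 => (Matrix.one_mul 1).symm
  | k + 1 => by
    rw [tpowMat, tpowMat_mul A B k]
    exact mul_kronecker_mul _ _ _ _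

lemma posSemidef_tpowMat {A : Matrix ι ι ℂ} (hA : A.PosSemidef) : ∀ k, (tpowMat A k).PosSemidef
  | 0 => PosSemidef.one
  | k + 1 => (posSemidef_tpowMat hA k).kronecker hA

lemma isState_tpowMat {ρ : Matrix ι ι ℂ} (hρ : IsState ρ) (k : ℕ) : IsState (tpowMat ρ k) :=
  ⟨posSemidef_tpowMat hρ.1 k, by rw [trace_tpowMat, hρ.2, one_pow]⟩

lemma matFun_tpowMat {A : Matrix ι ι ℂ} (hA : A.PosSemidef) {f : ℝ → ℝ} (hf1 : f 1 = 1)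
    (hf : ∀ x y, 0 ≤ x → 0 ≤ y → f (x * y) = f x * f y) :
    ∀ k, matFun f (tpowMat A k) = tpowMat (matFun f A) k
  | 0 => by
    rw [tpowMat, tpowMat, matFun_eq_cfc, cfc_apply_one, hf1, map_one]
  | k + 1 => by
    refine (matFun_kronecker (posSemidef_tpowMat hA k) hA hf).trans ?_
    rw [matFun_tpowMat hA hf1 hf k, tpowMat]

lemma mpow_tpowMat {A : Matrix ι ι ℂ} (hA : A.PosSemidef) (t : ℝ) (k : ℕ) :
    mpow (tpowMat A k) t = tpowMat (mpow A t) k := by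
  refine matFun_tpowMat hA (by simp) (fun x y hx hy => ?_) k
  rcases eq_or_ne x 0 with rfl | hx0
  · simp
  rcases eq_or_ne y 0 with rfl | hy0
  · simp
  simp [hx0, hy0, Real.mul_rpow hx hy]

variable {ρ σ : Matrix ι ι ℂ}

lemma suppLE_tpowMat (hσ : σ.PosSemidef) (h : SuppLE ρ σ) (k : ℕ) :
    SuppLE (tpowMat ρ k) (tpowMat σ k) := by
  rw [suppLE_iff_mul_mpow_zero (posSemidef_tpowMat hσ k).1, mpow_tpowMat hσ, ← tpowMat_mul,
    (suppLE_iff_mul_mpow_zero hσ.1).mp h]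

lemma petzQuasi_tpowMat (hρ : ρ.PosSemidef) (hσ : σ.PosSemidef) (α : ℝ) (k : ℕ) :
    petzQuasi α (tpowMat ρ k) (tpowMat σ k) = petzQuasi α ρ σ ^ k := by
  rw [petzQuasi, petzQuasi, mpow_tpowMat hρ, mpow_tpowMat hσ, ← tpowMat_mul, rtr, trace_tpowMat,
    mpow, mpow, ← ofReal_rtr_mul (isHermitian_matFun _ _) (isHermitian_matFun _ _),
    ← Complex.ofReal_pow, Complex.ofReal_re]

lemma petzRenyi_one_add_tpowMat (hρ : IsState ρ) (hσ : σ.PosSemidef) (h : SuppLE ρ σ) (t : ℝ)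
    (k : ℕ) :
    petzRenyi (1 + t) (tpowMat ρ k) (tpowMat σ k) = ((k : ℝ) : EReal) * petzRenyi (1 + t) ρ σ := by
  rw [petzRenyi_one_add (isState_tpowMat hρ k) (posSemidef_tpowMat hσ k) (suppLE_tpowMat hσ h k),
    petzRenyi_one_add hρ hσ h, petzQuasi_tpowMat hρ.1 hσ, Real.logb_pow, mul_left_comm,
    EReal.coe_mul]

end TensorPowers

section MomentGenerating

lemma exp_mul_le_one_add_add {u : ℝ} (hu : 0 ≤ u) (hu1 : u ≤ 1) (z : ℝ) :
    Real.exp (u * z) ≤ 1 + u * z + u ^ 2 * Real.exp |z| := by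
  have hexp (y : ℝ) : HasSum (fun k : ℕ => y ^ k / (k.factorial : ℝ)) (Real.exp y) := by
    rw [Real.exp_eq_exp_ℝ]
    exact NormedSpace.expSeries_div_hasSum_exp y
  have hlin : HasSum (fun k : ℕ => (if k = 0 then (1 : ℝ) else 0) + if k = 1 then u * z else 0)
      (1 + u * z) :=
    (hasSum_ite_eq 0 1).add (hasSum_ite_eq 1 _)
  refine hasSum_le (fun k => ?_) (hexp (u * z)) (hlin.add ((hexp |z|).mul_left (u ^ 2)))
  match k with
  | 0 => simpa using sq_nonneg u
  | 1 => simpa using by positivity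
  | k + 2 =>
    have hu2 : u ^ (k + 2) ≤ u ^ 2 := pow_le_pow_of_le_one hu hu1 (by omega)
    calc (u * z) ^ (k + 2) / ((k + 2).factorial : ℝ)
        ≤ u ^ 2 * |z| ^ (k + 2) / ((k + 2).factorial : ℝ) := by
          gcongr
          refine (le_abs_self _).trans ?_
          rw [abs_pow, abs_mul, abs_of_nonneg hu, mul_pow]
          gcongr
      _ = _ := by simp [mul_div_assoc]

variable {κ : Type*} {s : Finset κ} {P x : κ → ℝ}

/-- The moment bound `(1 / γ) log (∑ P e^{γx} + ∑ P e^{-γx} + 1)`. In nats, it is `c_γ` when `P` and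
`x` are the Nussbaum–Szkoła weights and log-likelihood ratios. -/
def momentScale (s : Finset κ) (P x : κ → ℝ) (γ : ℝ) : ℝ :=
  Real.log (∑ k ∈ s, P k * Real.exp (γ * x k) + ∑ k ∈ s, P k * Real.exp (-γ * x k) + 1) / γ

lemma two_le_sum_exp_add_sum_exp_neg (hP : ∀ k ∈ s, 0 ≤ P k) (hs : ∑ k ∈ s, P k = 1) (γ : ℝ) :
    2 ≤ ∑ k ∈ s, P k * Real.exp (γ * x k) + ∑ k ∈ s, P k * Real.exp (-γ * x k) := by
  rw [← Finset.sum_add_distrib]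
  calc (2 : ℝ) = ∑ k ∈ s, P k * 2 := by rw [← Finset.sum_mul, hs, one_mul]
    _ ≤ ∑ k ∈ s, (P k * Real.exp (γ * x k) + P k * Real.exp (-γ * x k)) := by
      refine Finset.sum_le_sum fun k hk => ?_
      rw [← mul_add]
      exact mul_le_mul_of_nonneg_left
        (by linarith [Real.add_one_le_exp (γ * x k), Real.add_one_le_exp (-γ * x k)]) (hP k hk)

lemma inv_le_momentScale (hP : ∀ k ∈ s, 0 ≤ P k) (hs : ∑ k ∈ s, P k = 1) {γ : ℝ} (hγ : 0 < γ) :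
    γ⁻¹ ≤ momentScale s P x γ := by
  have h2 := two_le_sum_exp_add_sum_exp_neg (x := x) hP hs γ
  rw [momentScale, ← one_div]
  gcongr
  rw [Real.le_log_iff_exp_le (by linarith)]
  linarith [Real.exp_one_lt_three]

/-- Jensen's inequality for `y ↦ y ^ K`, `K = γ * momentScale s P x γ`. -/
lemma sum_exp_abs_div_momentScale_le (hP : ∀ k ∈ s, 0 ≤ P k) (hs : ∑ k ∈ s, P k = 1) {γ : ℝ}
    (hγ : 0 < γ) : ∑ k ∈ s, P k * Real.exp |x k / momentScale s P x γ| ≤ Real.exp 1 := by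
  have h2 := two_le_sum_exp_add_sum_exp_neg (x := x) hP hs γ
  have hC := inv_le_momentScale (x := x) hP hs hγ
  set C := momentScale s P x γ
  have hC0 : 0 < C := (inv_pos.mpr hγ).trans_le hC
  have hK : 1 ≤ γ * C := (inv_le_iff_one_le_mul₀' hγ).mp hC
  have hexpK : ∑ k ∈ s, P k * Real.exp (γ * x k) + ∑ k ∈ s, P k * Real.exp (-γ * x k) + 1 =
      Real.exp (γ * C) := by
    simp only [C, momentScale]
    rw [mul_div_cancel₀ _ hγ.ne', Real.exp_log (by linarith)]
  have hpow : ∑ k ∈ s, P k * Real.exp |x k / C| ^ (γ * C) ≤ Real.exp (γ * C) := by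
    refine le_trans ?_ (hexpK ▸ le_add_of_nonneg_right zero_le_one)
    rw [← Finset.sum_add_distrib]
    refine Finset.sum_le_sum fun k hk => ?_
    have habs : |x k / C| * (γ * C) = |γ * x k| := by
      rw [abs_div, abs_mul, abs_of_pos hC0, abs_of_pos hγ]
      field_simp
    rw [← mul_add, ← Real.exp_mul, habs, neg_mul]
    exact mul_le_mul_of_nonneg_left (Real.exp_abs_le _) (hP k hk)
  have hsum0 : 0 ≤ ∑ k ∈ s, P k * Real.exp |x k / C| ^ (γ * C) :=
    Finset.sum_nonneg fun k hk => mul_nonneg (hP k hk) (by positivity)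
  calc ∑ k ∈ s, P k * Real.exp |x k / C|
      ≤ (∑ k ∈ s, P k * Real.exp |x k / C| ^ (γ * C)) ^ (1 / (γ * C)) :=
        Real.arith_mean_le_rpow_mean s P _ hP hs (fun k _ => (Real.exp_pos _).le) hK
    _ ≤ Real.exp (γ * C) ^ (1 / (γ * C)) := by gcongr
    _ = Real.exp 1 := by rw [← Real.exp_mul, mul_one_div_cancel (by positivity)]

lemma sum_exp_mul_le (hP : ∀ k ∈ s, 0 ≤ P k) (hs : ∑ k ∈ s, P k = 1) {C t : ℝ} (hC : 0 < C)
    (hPC : ∑ k ∈ s, P k * Real.exp |x k / C| ≤ Real.exp 1) (ht : 0 ≤ t) (htC : t * C ≤ 1) :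
    ∑ k ∈ s, P k * Real.exp (t * x k) ≤
      Real.exp (t * ∑ k ∈ s, P k * x k + Real.exp 1 * (t * C) ^ 2) := by
  have hmul k : t * x k = t * C * (x k / C) := by field_simp
  calc ∑ k ∈ s, P k * Real.exp (t * x k)
      ≤ ∑ k ∈ s, P k * (1 + t * x k + (t * C) ^ 2 * Real.exp |x k / C|) := by
        refine Finset.sum_le_sum fun k hk => mul_le_mul_of_nonneg_left ?_ (hP k hk)
        rw [hmul]
        exact exp_mul_le_one_add_add (by positivity) htC _
    _ = 1 + t * ∑ k ∈ s, P k * x k + (t * C) ^ 2 * ∑ k ∈ s, P k * Real.exp |x k / C| := by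
        simp only [mul_add, mul_one, Finset.sum_add_distrib, hs, Finset.mul_sum,
          mul_left_comm (P _)]
    _ ≤ t * ∑ k ∈ s, P k * x k + Real.exp 1 * (t * C) ^ 2 + 1 := by
        linarith [mul_le_mul_of_nonneg_left hPC (sq_nonneg (t * C))]
    _ ≤ _ := Real.add_one_le_exp _

end MomentGenerating

section ContinuityInOrder

open Matrix

variable {ι : Type} [Fintype ι] [DecidableEq ι] {ρ σ : Matrix ι ι ℂ}

lemma epow2_mul_petzRenyi (hρ : IsState ρ) (hσ : σ.PosSemidef) (h : SuppLE ρ σ) {t : ℝ}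
    (ht : t ≠ 0) : epow2 ((t : EReal) * petzRenyi (1 + t) ρ σ) = petzQuasi (1 + t) ρ σ := by
  rw [petzRenyi_one_add hρ hσ h, ← EReal.coe_mul, mul_inv_cancel_left₀ ht, epow2,
    if_neg (EReal.coe_ne_top _), if_neg (EReal.coe_ne_bot _), EReal.toReal_coe,
    Real.rpow_logb two_pos (by norm_num) (petzQuasi_pos hρ hσ h t)]

lemma epow2_nonneg (x : EReal) : 0 ≤ epow2 x := by
  rw [epow2]
  split_ifs
  · exact le_top
  · exact le_rfl
  · exact EReal.coe_nonneg.mpr (by positivity)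

lemma cGamma_eq_top {γ : ℝ} (hγ : 0 < γ) (h : ¬ SuppLE ρ σ) : cGamma γ ρ σ = ⊤ := by
  have hbot {x : EReal} (hx : 0 ≤ x) : x ≠ ⊥ := (EReal.bot_lt_zero.trans_le hx).ne'
  rw [cGamma, petzRenyi, if_pos ⟨by linarith, h⟩, EReal.coe_mul_top_of_pos hγ, epow2, if_pos rfl,
    EReal.top_add_of_ne_bot (hbot (epow2_nonneg _)), EReal.top_add_of_ne_bot (hbot zero_le_one),
    elogE, if_pos rfl, EReal.coe_mul_top_of_pos (inv_pos.mpr hγ)]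

lemma cGamma_eq_momentScale (hρ : IsState ρ) (hσ : σ.PosSemidef) (h : SuppLE ρ σ) {γ : ℝ}
    (hγ : 0 < γ) :
    cGamma γ ρ σ = (momentScale Finset.univ (nsWeight hρ.1.1 hσ.1) (nsLogRatio hρ.1.1 hσ.1) γ /
      Real.log 2 : ℝ) := by
  have hpos := petzQuasi_pos hρ hσ h γ
  have hneg := petzQuasi_pos hρ hσ h (-γ)
  rw [cGamma, epow2_mul_petzRenyi hρ hσ h hγ.ne', sub_eq_add_neg,
    epow2_mul_petzRenyi hρ hσ h (neg_ne_zero.mpr hγ.ne'), ← EReal.coe_one, ← EReal.coe_add,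
    ← EReal.coe_add, elogE, if_neg (EReal.coe_ne_top _), EReal.toReal_coe, elog,
    if_neg (by linarith), ← EReal.coe_mul, petzQuasi_eq_sum hρ.1 hσ h, petzQuasi_eq_sum hρ.1 hσ h,
    momentScale, Real.logb, inv_mul_eq_div, div_right_comm]

lemma inv_le_of_cGamma_eq_coe (hρ : IsState ρ) (hσ : σ.PosSemidef) (h : SuppLE ρ σ) {γ c : ℝ}
    (hγ : 0 < γ) (hc : cGamma γ ρ σ = c) : γ⁻¹ ≤ c := by
  have hsum := (sum_nsWeight hρ.1.1 hσ.1).trans (by rw [rtr, hρ.2, Complex.one_re])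
  have hC := inv_le_momentScale (x := nsLogRatio hρ.1.1 hσ.1)
    (fun k _ => nsWeight_nonneg hρ.1 hσ.1 k) hsum hγ
  rw [cGamma_eq_momentScale hρ hσ h hγ, EReal.coe_eq_coe_iff] at hc
  have hlog : Real.log 2 ≤ 1 := by linarith [Real.log_two_lt_d9]
  rw [← hc]
  exact hC.trans (le_div_self ((inv_pos.mpr hγ).le.trans hC) (Real.log_pos one_lt_two) hlog)

/-- The factor `2` is an upper bound for `e log 2`. -/
theorem petzRenyi_le_relEntropy_add (hρ : IsState ρ) (hσ : σ.PosSemidef) (h : SuppLE ρ σ)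
    {γ δ c : ℝ} (hγ : 0 < γ) (hc : cGamma γ ρ σ = c) (hδ : 0 < δ) (hδc : δ * c * Real.log 2 ≤ 1) :
    petzRenyi (1 + δ) ρ σ ≤ relEntropy ρ σ + (2 * δ * c ^ 2 : ℝ) := by
  have hc0 : 0 < c := (inv_pos.mpr hγ).trans_le (inv_le_of_cGamma_eq_coe hρ hσ h hγ hc)
  have hlog : 0 < Real.log 2 := Real.log_pos one_lt_two
  have hsum := (sum_nsWeight hρ.1.1 hσ.1).trans (by rw [rtr, hρ.2, Complex.one_re])
  have hP k (_ : k ∈ Finset.univ) : 0 ≤ nsWeight hρ.1.1 hσ.1 k := nsWeight_nonneg hρ.1 hσ.1 k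
  rw [cGamma_eq_momentScale hρ hσ h hγ, EReal.coe_eq_coe_iff, div_eq_iff hlog.ne'] at hc
  have hQ := sum_exp_mul_le hP hsum (mul_pos hc0 hlog)
    (hc ▸ sum_exp_abs_div_momentScale_le hP hsum hγ) hδ.le (by rwa [← mul_assoc])
  rw [← petzQuasi_eq_sum hρ.1 hσ h] at hQ
  rw [petzRenyi_one_add hρ hσ h, relEntropy_eq_sum hρ.1.1 hσ.1 h, ← EReal.coe_add,
    EReal.coe_le_coe_iff]
  set m := ∑ k, nsWeight hρ.1.1 hσ.1 k * nsLogRatio hρ.1.1 hσ.1 k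
  have hlogQ := (Real.log_le_iff_le_exp (petzQuasi_pos hρ hσ h δ)).mpr hQ
  have helog : Real.exp 1 * Real.log 2 ≤ 2 := by
    nlinarith [Real.exp_one_lt_d9, Real.log_two_lt_d9]
  calc δ⁻¹ * Real.logb 2 (petzQuasi (1 + δ) ρ σ)
      ≤ δ⁻¹ * ((δ * m + Real.exp 1 * (δ * (c * Real.log 2)) ^ 2) / Real.log 2) := by
        rw [Real.logb]
        gcongr
    _ = m / Real.log 2 + Real.exp 1 * Real.log 2 * (δ * c ^ 2) := by field_simp
    _ ≤ m / Real.log 2 + 2 * (δ * c ^ 2) := by gcongr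
    _ = m / Real.log 2 + 2 * δ * c ^ 2 := by rw [mul_assoc]

end ContinuityInOrder

section Asymptotics

open Matrix

variable {ι : Type} [Fintype ι] [DecidableEq ι] {ρ σ : Matrix ι ι ℂ}

lemma inv_mul_dMaxSmooth_tpowMat_le_petzRenyi_add (hρ : IsState ρ) (hσ : σ.PosSemidef)
    (h : SuppLE ρ σ) {δ ε : ℝ} (hδ : 0 < δ) (hδ1 : δ ≤ 1) (hε : 0 < ε) (hε1 : ε < 1)
    {n : ℕ} (hn : n ≠ 0) :
    (((n : ℝ)⁻¹ : ℝ) : EReal) * dMaxSmooth ε (tpowMat ρ n) (tpowMat σ n) ≤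
      petzRenyi (1 + δ) ρ σ +
        (Real.logb 2 (2 / ε ^ 2) / (n * δ) + (n : ℝ)⁻¹ * Real.logb 2 (1 / (1 - ε ^ 2)) : ℝ) := by
  have hn0 : (n : ℝ) ≠ 0 := Nat.cast_ne_zero.mpr hn
  have hsmooth := dMaxSmooth_le_petzRenyi (isState_tpowMat hρ n) (posSemidef_tpowMat hσ n)
    hδ hδ1 hε hε1
  rw [petzRenyi_one_add_tpowMat hρ hσ h] at hsmooth
  refine (mul_le_mul_of_nonneg_left hsmooth (by positivity)).trans_eq ?_
  rw [petzRenyi_one_add hρ hσ h, ← EReal.coe_mul, ← EReal.coe_add, ← EReal.coe_mul,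
    ← EReal.coe_add]
  congr 1
  field_simp

lemma two_mul_mul_sq_add_logb_div_le {c s ε : ℝ} (hc : 0 < c) (hs : 0 < s) (hε : 0 < ε) :
    2 * (2 * s * c)⁻¹ * c ^ 2 + Real.logb 2 (2 / ε ^ 2) / (s ^ 2 * (2 * s * c)⁻¹) ≤
      4 * Real.logb 2 (2 / ε) / s * c := by
  have hlog : Real.logb 2 (2 / ε ^ 2) = 2 * Real.logb 2 (2 / ε) - 1 := by
    rw [Real.logb_div two_ne_zero (by positivity), Real.logb_div two_ne_zero hε.ne', Real.logb_pow,
      Real.logb_self_eq_one one_lt_two]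
    push_cast
    ring
  calc _ = 4 * Real.logb 2 (2 / ε) / s * c - c / s := by
        rw [hlog]
        field_simp
        ring
    _ ≤ 4 * Real.logb 2 (2 / ε) / s * c := sub_le_self _ (by positivity)

lemma inv_mul_dMaxSmooth_tpowMat_le_relEntropy_add (hρ : IsState ρ) (hσ : σ.PosSemidef)
    (h : SuppLE ρ σ) {γ ε c : ℝ} {n : ℕ} (hγ : 0 < γ) (hγn : γ ≤ 2 * √n) (hε : 0 < ε) (hε1 : ε < 1)
    (hc : cGamma γ ρ σ = c) :
    (((n : ℝ)⁻¹ : ℝ) : EReal) * dMaxSmooth ε (tpowMat ρ n) (tpowMat σ n) ≤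
      relEntropy ρ σ + (4 * Real.logb 2 (2 / ε) / √n * c +
        (n : ℝ)⁻¹ * Real.logb 2 (1 / (1 - ε ^ 2)) : ℝ) := by
  have hn : n ≠ 0 := by
    rintro rfl
    exact hγ.not_ge (by simpa using hγn)
  have hs1 : 1 ≤ √(n : ℝ) :=
    Real.one_le_sqrt.mpr (Nat.one_le_cast.mpr (Nat.one_le_iff_ne_zero.mpr hn))
  have hs : 0 < √(n : ℝ) := one_pos.trans_le hs1
  have hcγ : γ⁻¹ ≤ c := inv_le_of_cGamma_eq_coe hρ hσ h hγ hc
  have hc0 : 0 < c := (inv_pos.mpr hγ).trans_le hcγ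
  have hparam := two_mul_mul_sq_add_logb_div_le hc0 hs hε
  rw [Real.sq_sqrt n.cast_nonneg] at hparam
  -- This order balances the divergence term `2 δ c²` against the smoothing term `1 / (n δ)`.
  set δ := (2 * √n * c)⁻¹
  have hδ : 0 < δ := by positivity
  have hδ1 : δ ≤ 1 := inv_le_one_of_one_le₀ <|
    calc 1 = γ * γ⁻¹ := (mul_inv_cancel₀ hγ.ne').symm
      _ ≤ 2 * √n * c := by gcongr
  have hδc : δ * c * Real.log 2 ≤ 1 :=
    calc δ * c * Real.log 2 = Real.log 2 / (2 * √n) := by simp only [δ]; field_simp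
      _ ≤ 1 := (div_le_one (by positivity)).mpr (by linarith [Real.log_two_lt_d9])
  refine (inv_mul_dMaxSmooth_tpowMat_le_petzRenyi_add hρ hσ h hδ hδ1 hε hε1 hn).trans ?_
  refine (add_le_add_left (petzRenyi_le_relEntropy_add hρ hσ h hγ hc hδ hδc) _).trans ?_
  rw [add_assoc, ← EReal.coe_add]
  refine add_le_add_right (EReal.coe_le_coe_iff.mpr ?_) _
  linarith

theorem dMaxSmooth_AEP_upper_general (hρ : IsState ρ) (hσ : σ.PosSemidef) {γ ε : ℝ} {n : ℕ}
    (hγ : 0 < γ) (hγn : γ ≤ 2 * √n) (hε : 0 < ε) (hε1 : ε < 1) :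
    (((n : ℝ)⁻¹ : ℝ) : EReal) * dMaxSmooth ε (tpowMat ρ n) (tpowMat σ n) ≤
      relEntropy ρ σ +
        ((4 * Real.logb 2 (2 / ε) / √n : ℝ) : EReal) * cGamma γ ρ σ +
        (((n : ℝ)⁻¹ * Real.logb 2 (1 / (1 - ε ^ 2)) : ℝ) : EReal) := by
  have hs : 0 < √(n : ℝ) := by linarith
  by_cases h : SuppLE ρ σ
  · have hc := cGamma_eq_momentScale hρ hσ h hγ
    rw [hc, add_assoc, ← EReal.coe_mul, ← EReal.coe_add]
    exact inv_mul_dMaxSmooth_tpowMat_le_relEntropy_add hρ hσ h hγ hγn hε hε1 hc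
  · have hlog : 0 < Real.logb 2 (2 / ε) :=
      Real.logb_pos one_lt_two (by rw [one_lt_div hε]; linarith)
    rw [cGamma_eq_top hγ h, relEntropy, if_neg h, EReal.coe_mul_top_of_pos (by positivity),
      EReal.top_add_top, EReal.top_add_coe]
    exact le_top

end Asymptotics

/-- Non-asymptotic AEP upper bound for the smoothed max-relative entropy. -/
theorem dMaxSmooth_AEP_upper {d : ℕ} (ρ σ : Matrix (Fin d) (Fin d) ℂ)
    (hρ : IsState ρ) (hσ : IsState σ) (γ : ℝ) (hγ : 0 < γ ∧ γ ≤ 1)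
    (ε : ℝ) (hε : 0 < ε ∧ ε < 1) (n : ℕ) (hn : 1 ≤ n) :
    (((n : ℝ)⁻¹ : ℝ) : EReal) * dMaxSmooth ε (tpowMat ρ n) (tpowMat σ n) ≤
      relEntropy ρ σ +
        ((4 * Real.logb 2 (2 / ε) / Real.sqrt n : ℝ) : EReal) * cGamma γ ρ σ +
        (((n : ℝ)⁻¹ * Real.logb 2 (1 / (1 - ε ^ 2)) : ℝ) : EReal) := by
  have hs : 1 ≤ √(n : ℝ) := Real.one_le_sqrt.mpr (Nat.one_le_cast.mpr hn)
  exact dMaxSmooth_AEP_upper_general hρ hσ.1 hγ.1 (by linarith) hε.1 hε.2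

end QCD
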